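/- arXiv:2508.03887 — 2 statements merged into one kernel-verified Lean document; each statement's English description precedes it below -/
import Mathlib

section
/- Let n > 1 and let K, L ⊆ ℝⁿ be nonempty closed convex sets whose cross covariogram g = g_{K,L} satisfies 0 < g(a) < ∞ for some a ∈ ℝⁿ. Let w ≠ 0 be a vector such that both w and −w lie in K + (−L). If g(0)^{1/n} = ½ (g(−w)^{1/n} + g(w)^{1/n}) > 0, then there exist v ∈ ℝⁿ and λ ∈ [−1,1] such that, for all t ∈ [−1,1], (1 + tλ)(K ∩ L) = (K − tv) ∩ (L + t(w − v)). -/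
open MeasureTheory Set Pointwise

open scoped ENNReal

theorem IsCompact.volume_add_volume_le_volume_add {A B : Set ℝ} (hA : IsCompact A)
    (hB : IsCompact B) (hAne : A.Nonempty) (hBne : B.Nonempty) :
    volume A + volume B ≤ volume (A + B) := by
  have ha : sSup A ∈ A := hA.sSup_mem hAne
  have hb : sInf B ∈ B := hB.sInf_mem hBne
  have hsub : (sInf B +ᵥ A) ∪ (sSup A +ᵥ B) ⊆ A + B := by
    rintro x (hx | hx)
    · obtain ⟨y, hy, rfl⟩ := hx
      exact ⟨y, hy, sInf B, hb, by simp [add_comm]⟩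
    · obtain ⟨y, hy, rfl⟩ := hx
      exact ⟨sSup A, ha, y, hy, by simp⟩
  have hdisj : AEDisjoint volume (sInf B +ᵥ A) (sSup A +ᵥ B) := by
    refine measure_mono_null (t := {sSup A + sInf B}) ?_ (by simp)
    rintro x ⟨⟨y, hy, rfl⟩, ⟨z, hz, hzy⟩⟩
    have h1 : y ≤ sSup A := le_csSup hA.bddAbove hy
    have h2 : sInf B ≤ z := csInf_le hB.bddBelow hz
    simp only [vadd_eq_add, mem_singleton_iff] at hzy ⊢
    linarith
  calc volume A + volume B = volume (sInf B +ᵥ A) + volume (sSup A +ᵥ B) := by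
        rw [measure_vadd, measure_vadd]
    _ = volume ((sInf B +ᵥ A) ∪ (sSup A +ᵥ B)) :=
        (measure_union₀ (hB.vadd _).measurableSet.nullMeasurableSet hdisj).symm
    _ ≤ _ := measure_mono hsub

theorem volume_weighted_sum_le {p q : ℝ} (hp : 0 < p) (hq : 0 < q) {A B C : Set ℝ}
    (hA : MeasurableSet A) (hB : MeasurableSet B) (hAne : A.Nonempty) (hBne : B.Nonempty)
    (hC : ∀ x ∈ A, ∀ y ∈ B, p * x + q * y ∈ C) :
    ENNReal.ofReal p * volume A + ENNReal.ofReal q * volume B ≤ volume C := by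
  have key : ∀ S, S ⊆ A → IsCompact S → ∀ T, T ⊆ B → IsCompact T →
      ENNReal.ofReal p * volume S + ENNReal.ofReal q * volume T ≤ volume C := by
    intro S hSA hS T hTB hT
    obtain ⟨a, ha⟩ := hAne
    obtain ⟨b, hb⟩ := hBne
    have h := ((hS.insert a).smul p).volume_add_volume_le_volume_add ((hT.insert b).smul q)
      ((insert_nonempty a S).smul_set) ((insert_nonempty b T).smul_set)
    rw [Measure.addHaar_smul, Measure.addHaar_smul] at h
    simp only [Module.finrank_self, pow_one, abs_of_pos hp, abs_of_pos hq] at h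
    refine le_trans (le_trans ?_ h) (measure_mono ?_)
    · gcongr <;> exact subset_insert _ _
    · rintro _ ⟨_, ⟨x, hx, rfl⟩, _, ⟨y, hy, rfl⟩, rfl⟩
      exact hC x (insert_subset ha hSA hx) y (insert_subset hb hTB hy)
  rw [hA.measure_eq_iSup_isCompact, hB.measure_eq_iSup_isCompact]
  simp only [ENNReal.mul_iSup, iSup_and']
  exact ENNReal.biSup_add_biSup_le' (p := fun S => S ⊆ A ∧ IsCompact S)
    (q := fun T => T ⊆ B ∧ IsCompact T) ⟨∅, empty_subset _, isCompact_empty⟩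
    ⟨∅, empty_subset _, isCompact_empty⟩ fun S hS T hT => key S hS.1 hS.2 T hT.1 hT.2

/-- The layer-cake form of the one-dimensional Prékopa–Leindler inequality, for functions with
supremum one. -/
theorem lintegral_weighted_sum_le {p q : ℝ} (hp : 0 < p) (hq : 0 < q) {f g h : ℝ → ℝ}
    (hf : Measurable f) (hg : Measurable g) (hh : Measurable h)
    (hf0 : 0 ≤ f) (hg0 : 0 ≤ g) (hh0 : 0 ≤ h) (hf1 : f ≤ 1) (hg1 : g ≤ 1)
    (hfs : ∀ r, 0 < r → r < 1 → ∃ x, r < f x) (hgs : ∀ r, 0 < r → r < 1 → ∃ x, r < g x)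
    (hfgh : ∀ r, 0 < r → r < 1 → ∀ x y, r < f x → r < g y → r < h (p * x + q * y)) :
    ENNReal.ofReal p * (∫⁻ x, ENNReal.ofReal (f x)) + ENNReal.ofReal q *
      (∫⁻ x, ENNReal.ofReal (g x)) ≤ ∫⁻ x, ENNReal.ofReal (h x) := by
  have hanti : ∀ u : ℝ → ℝ, Measurable fun r : ℝ => volume {a | r < u a} := fun u =>
    Antitone.measurable fun r s hrs => measure_mono fun x (hx : s < u x) => hrs.trans_lt hx
  rw [lintegral_eq_lintegral_meas_lt _ (.of_forall hf0) hf.aemeasurable,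
    lintegral_eq_lintegral_meas_lt _ (.of_forall hg0) hg.aemeasurable,
    lintegral_eq_lintegral_meas_lt _ (.of_forall hh0) hh.aemeasurable,
    ← lintegral_const_mul _ (hanti f), ← lintegral_const_mul _ (hanti g),
    ← lintegral_add_left ((hanti f).const_mul _)]
  refine setLIntegral_mono (hanti h) fun r (hr : 0 < r) => ?_
  rcases lt_or_ge r 1 with hr1 | hr1
  · exact volume_weighted_sum_le hp hq (measurableSet_lt measurable_const hf)
      (measurableSet_lt measurable_const hg) (hfs r hr hr1) (hgs r hr hr1)
      fun x hx y hy => hfgh r hr hr1 x y hx hy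
  · have hfe : {a | r < f a} = ∅ := eq_empty_of_forall_notMem fun x hx =>
      absurd (hf1 x) (not_le.2 (hr1.trans_lt hx))
    have hge : {a | r < g a} = ∅ := eq_empty_of_forall_notMem fun x hx =>
      absurd (hg1 x) (not_le.2 (hr1.trans_lt hx))
    simp [hfe, hge]

theorem ENNReal.geom_mean_le_arith_mean2 {p q : ℝ} (hp : 0 < p) (hq : 0 < q) (hpq : p + q = 1)
    (a b : ℝ≥0∞) : a ^ p * b ^ q ≤ ENNReal.ofReal p * a + ENNReal.ofReal q * b := by
  have hc : (p⁻¹).HolderConjugate q⁻¹ := by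
    rw [Real.holderConjugate_iff]
    refine ⟨(one_lt_inv₀ hp).2 (by linarith), by simpa using hpq⟩
  have h := ENNReal.young_inequality (a ^ p) (b ^ q) hc
  rw [← ENNReal.rpow_mul, ← ENNReal.rpow_mul, mul_inv_cancel₀ hp.ne', mul_inv_cancel₀ hq.ne',
    ENNReal.rpow_one, ENNReal.rpow_one, ENNReal.ofReal_inv_of_pos hp, ENNReal.ofReal_inv_of_pos hq,
    div_eq_mul_inv, div_eq_mul_inv, inv_inv, inv_inv, mul_comm a, mul_comm b] at h
  exact h

theorem prekopa_leindler_real_of_bounded {p q : ℝ} (hp : 0 < p) (hq : 0 < q) (hpq : p + q = 1)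
    {f g h : ℝ → ℝ≥0∞} (hf : Measurable f) (hg : Measurable g) (hh : Measurable h)
    {N : ℝ≥0∞} (hN : N ≠ ∞) (hfN : ∀ x, f x ≤ N) (hgN : ∀ x, g x ≤ N)
    (hfgh : ∀ x y, f x ^ p * g y ^ q ≤ h (p * x + q * y)) :
    (∫⁻ x, f x) ^ p * (∫⁻ x, g x) ^ q ≤ ∫⁻ x, h x := by
  obtain ⟨a, ha⟩ : ∃ a, a = ⨆ x, f x := ⟨_, rfl⟩
  obtain ⟨b, hb⟩ : ∃ b, b = ⨆ x, g x := ⟨_, rfl⟩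
  have hfa : ∀ x, f x ≤ a := fun x => ha ▸ le_iSup f x
  have hgb : ∀ x, g x ≤ b := fun x => hb ▸ le_iSup g x
  have ha_top : a ≠ ∞ := ne_top_of_le_ne_top hN (ha ▸ iSup_le hfN)
  have hb_top : b ≠ ∞ := ne_top_of_le_ne_top hN (hb ▸ iSup_le hgN)
  rcases eq_or_ne a 0 with ha0 | ha0
  · have : ∀ x, f x = 0 := fun x => le_antisymm (ha0 ▸ hfa x) zero_le
    simp [this, hp]
  rcases eq_or_ne b 0 with hb0 | hb0
  · have : ∀ x, g x = 0 := fun x => le_antisymm (hb0 ▸ hgb x) zero_le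
    simp [this, hq]
  have hsup : ∀ (u : ℝ → ℝ≥0∞) (c : ℝ≥0∞), c = ⨆ x, u x → c ≠ 0 → c ≠ ∞ →
      ∀ r : ℝ, 0 < r → r < 1 → ∃ x, r < (u x / c).toReal := by
    intro u c hc hc0 hct r hr hr1
    have hlt : ENNReal.ofReal r * c < ⨆ x, u x := by
      rw [← hc]
      conv_rhs => rw [← one_mul c]
      exact ENNReal.mul_lt_mul_left hc0 hct (ENNReal.ofReal_lt_one.2 hr1)
    obtain ⟨x, hx⟩ := lt_iSup_iff.1 hlt
    have hle : u x ≤ c := hc ▸ le_iSup u x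
    refine ⟨x, (ENNReal.ofReal_lt_iff_lt_toReal hr.le
      (ENNReal.div_ne_top (ne_top_of_le_ne_top hct hle) hc0)).1 ?_⟩
    rwa [ENNReal.lt_div_iff_mul_lt (.inl hc0) (.inl hct)]
  have hc0 : a ^ p * b ^ q ≠ 0 := by simp [ha0, hb0, ha_top, hb_top]
  have hct : a ^ p * b ^ q ≠ ∞ := by
    refine ENNReal.mul_ne_top ?_ ?_ <;> apply ENNReal.rpow_ne_top_of_nonneg <;> first | linarith | assumption
  have hfat : ∀ x, f x / a ≠ ∞ := fun x =>
    ENNReal.div_ne_top (ne_top_of_le_ne_top ha_top (hfa x)) ha0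
  have hgbt : ∀ x, g x / b ≠ ∞ := fun x =>
    ENNReal.div_ne_top (ne_top_of_le_ne_top hb_top (hgb x)) hb0
  have hht : ∀ x, min (h x / (a ^ p * b ^ q)) 1 ≠ ∞ := fun x =>
    ne_top_of_le_ne_top ENNReal.one_ne_top (min_le_right _ _)
  have main := lintegral_weighted_sum_le hp hq (f := fun x => (f x / a).toReal)
    (g := fun x => (g x / b).toReal)
    (h := fun x => (min (h x / (a ^ p * b ^ q)) 1).toReal)
    (hf.div_const _).ennreal_toReal (hg.div_const _).ennreal_toReal
    ((hh.div_const _).min measurable_const).ennreal_toReal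
    (fun _ => ENNReal.toReal_nonneg) (fun _ => ENNReal.toReal_nonneg)
    (fun _ => ENNReal.toReal_nonneg)
    (fun x => ENNReal.toReal_le_of_le_ofReal zero_le_one
      (by simpa using ENNReal.div_le_of_le_mul (by simpa using hfa x)))
    (fun x => ENNReal.toReal_le_of_le_ofReal zero_le_one
      (by simpa using ENNReal.div_le_of_le_mul (by simpa using hgb x)))
    (hsup f a ha ha0 ha_top) (hsup g b hb hb0 hb_top) (by
      intro r hr hr1 x y hx hy
      rw [← ENNReal.ofReal_lt_iff_lt_toReal hr.le (hfat x)] at hx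
      rw [← ENNReal.ofReal_lt_iff_lt_toReal hr.le (hgbt y)] at hy
      rw [← ENNReal.ofReal_lt_iff_lt_toReal hr.le (hht _)]
      refine lt_min ?_ (ENNReal.ofReal_lt_one.2 hr1)
      calc ENNReal.ofReal r = ENNReal.ofReal r ^ p * ENNReal.ofReal r ^ q := by
            rw [← ENNReal.rpow_add _ _ (by simpa using hr) ENNReal.ofReal_ne_top, hpq,
              ENNReal.rpow_one]
        _ < (f x / a) ^ p * (g y / b) ^ q :=
            ENNReal.mul_lt_mul (ENNReal.rpow_lt_rpow hx hp) (ENNReal.rpow_lt_rpow hy hq)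
        _ = f x ^ p * g y ^ q / (a ^ p * b ^ q) := by
            rw [ENNReal.div_rpow_of_nonneg _ _ hp.le, ENNReal.div_rpow_of_nonneg _ _ hq.le,
              ENNReal.mul_div_mul_comm (.inr (by simp [hb0, hb_top])) (.inl (by simp [ha0, ha_top]))]
        _ ≤ _ := by gcongr; exact hfgh x y)
  simp only [ENNReal.ofReal_toReal (hfat _), ENNReal.ofReal_toReal (hgbt _),
    ENNReal.ofReal_toReal (hht _)] at main
  have main' : ((∫⁻ x, f x) / a) ^ p * ((∫⁻ x, g x) / b) ^ q ≤ (∫⁻ x, h x) / (a ^ p * b ^ q) := by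
    refine (ENNReal.geom_mean_le_arith_mean2 hp hq hpq _ _).trans ?_
    simp only [div_eq_mul_inv] at main ⊢
    rw [lintegral_mul_const _ hf, lintegral_mul_const _ hg] at main
    rw [← lintegral_mul_const _ hh]
    exact main.trans (lintegral_mono fun x => min_le_left _ _)
  rw [ENNReal.div_rpow_of_nonneg _ _ hp.le, ENNReal.div_rpow_of_nonneg _ _ hq.le,
    ← ENNReal.mul_div_mul_comm (.inr (by simp [hb0, hb_top])) (.inl (by simp [ha0, ha_top])),
    ENNReal.div_le_iff hc0 hct, ENNReal.div_mul_cancel hc0 hct] at main'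
  exact main'

theorem prekopa_leindler_real {p q : ℝ} (hp : 0 < p) (hq : 0 < q) (hpq : p + q = 1)
    {f g h : ℝ → ℝ≥0∞} (hf : Measurable f) (hg : Measurable g) (hh : Measurable h)
    (hfgh : ∀ x y, f x ^ p * g y ^ q ≤ h (p * x + q * y)) :
    (∫⁻ x, f x) ^ p * (∫⁻ x, g x) ^ q ≤ ∫⁻ x, h x := by
  have htrunc : ∀ u : ℝ → ℝ≥0∞, Measurable u →
      ∫⁻ x, u x = ⨆ N : ℕ, ∫⁻ x, min (u x) N := by
    intro u hu
    rw [← lintegral_iSup (fun N => hu.min measurable_const)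
      (fun N M hNM x => min_le_min_left _ (by exact_mod_cast hNM))]
    refine lintegral_congr fun x => ?_
    rw [← inf_iSup_eq, ENNReal.iSup_natCast, inf_top_eq]
  rw [htrunc f hf, htrunc g hg, ← ENNReal.orderIsoRpow_apply p hp, ← ENNReal.orderIsoRpow_apply q hq,
    OrderIso.map_iSup, OrderIso.map_iSup, ENNReal.iSup_mul]
  refine iSup_le fun N => ?_
  rw [ENNReal.mul_iSup]
  refine iSup_le fun M => ?_
  simp only [ENNReal.orderIsoRpow_apply]
  have hmax := prekopa_leindler_real_of_bounded hp hq hpq (f := fun x => min (f x) (max N M : ℕ))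
    (g := fun x => min (g x) (max N M : ℕ)) (hf.min measurable_const) (hg.min measurable_const) hh
    (ENNReal.natCast_ne_top (max N M)) (fun x => min_le_right _ _) (fun x => min_le_right _ _)
    (fun x y => le_trans (by gcongr <;> exact min_le_left _ _) (hfgh x y))
  refine le_trans ?_ hmax
  gcongr
  · exact le_max_left N M
  · exact le_max_right N M

/-- The Prékopa–Leindler inequality, as a property of a measure on a real vector space. -/
def PrekopaLeindler {E : Type*} [MeasurableSpace E] [AddCommGroup E] [Module ℝ E]
    (μ : Measure E) : Prop :=
  ∀ ⦃p q : ℝ⦄, 0 < p → 0 < q → p + q = 1 → ∀ ⦃f g h : E → ℝ≥0∞⦄, Measurable f → Measurable g →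
    Measurable h → (∀ x y, f x ^ p * g y ^ q ≤ h (p • x + q • y)) →
    (∫⁻ x, f x ∂μ) ^ p * (∫⁻ x, g x ∂μ) ^ q ≤ ∫⁻ x, h x ∂μ

namespace PrekopaLeindler

theorem real : PrekopaLeindler (volume : Measure ℝ) :=
  fun _ _ hp hq hpq _ _ _ hf hg hh hfgh => prekopa_leindler_real hp hq hpq hf hg hh hfgh

variable {E F : Type*} [MeasurableSpace E] [AddCommGroup E] [Module ℝ E]
  [MeasurableSpace F] [AddCommGroup F] [Module ℝ F] {μ : Measure E} {ν : Measure F}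

theorem prod [SFinite μ] [SFinite ν] (hμ : PrekopaLeindler μ) (hν : PrekopaLeindler ν) :
    PrekopaLeindler (μ.prod ν) := by
  intro p q hp hq hpq f g h hf hg hh hfgh
  rw [lintegral_prod _ hf.aemeasurable, lintegral_prod _ hg.aemeasurable,
    lintegral_prod _ hh.aemeasurable]
  exact hμ hp hq hpq hf.lintegral_prod_right' hg.lintegral_prod_right' hh.lintegral_prod_right'
    fun x y => hν hp hq hpq (hf.comp measurable_prodMk_left) (hg.comp measurable_prodMk_left)
      (hh.comp measurable_prodMk_left) fun z w => hfgh (x, z) (y, w)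

theorem of_measurePreserving (hν : PrekopaLeindler ν) (e : F →ₗ[ℝ] E)
    (he : MeasurePreserving e ν μ) : PrekopaLeindler μ := by
  intro p q hp hq hpq f g h hf hg hh hfgh
  rw [← he.lintegral_comp hf, ← he.lintegral_comp hg, ← he.lintegral_comp hh]
  refine hν hp hq hpq (hf.comp he.measurable) (hg.comp he.measurable) (hh.comp he.measurable)
    fun x y => ?_
  simpa using hfgh (e x) (e y)

theorem setLIntegral_rpow_mul_le (hμ : PrekopaLeindler μ) {p q : ℝ} (hp : 0 < p)
    (hq : 0 < q) (hpq : p + q = 1) {A₀ A₁ M : Set E} (hA₀ : MeasurableSet A₀)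
    (hA₁ : MeasurableSet A₁) (hM : MeasurableSet M)
    (hsum : ∀ x ∈ A₀, ∀ y ∈ A₁, p • x + q • y ∈ M) {f g h : E → ℝ≥0∞} (hf : Measurable f)
    (hg : Measurable g) (hh : Measurable h)
    (hfgh : ∀ x y, f x ^ p * g y ^ q ≤ h (p • x + q • y)) :
    (∫⁻ x in A₀, f x ∂μ) ^ p * (∫⁻ x in A₁, g x ∂μ) ^ q ≤ ∫⁻ x in M, h x ∂μ := by
  rw [← lintegral_indicator hA₀, ← lintegral_indicator hA₁, ← lintegral_indicator hM]
  refine hμ hp hq hpq (hf.indicator hA₀) (hg.indicator hA₁) (hh.indicator hM) fun x y => ?_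
  by_cases hx : x ∈ A₀
  · by_cases hy : y ∈ A₁
    · simpa [hx, hy, hsum x hx y hy] using hfgh x y
    · simp [hy, hq]
  · simp [hx, hp]

theorem pi (n : ℕ) : PrekopaLeindler (volume : Measure (Fin n → ℝ)) := by
  induction n with
  | zero =>
    intro p q hp hq hpq f g h hf hg hh hfgh
    have hv : (volume : Measure (Fin 0 → ℝ)) = Measure.dirac 0 := Measure.volume_pi_eq_dirac 0
    rw [hv, lintegral_dirac' _ hf, lintegral_dirac' _ hg, lintegral_dirac' _ hh]
    simpa using hfgh 0 0
  | succ n ih =>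
    have hcons : ⇑(Fin.consLinearEquiv ℝ (fun _ : Fin (n + 1) => ℝ)).toLinearMap =
        (MeasurableEquiv.piFinSuccAbove (fun _ : Fin (n + 1) => ℝ) 0).symm := by
      funext x
      exact (Fin.insertNth_zero' x.1 x.2).symm
    refine (real.prod ih).of_measurePreserving
      (Fin.consLinearEquiv ℝ (fun _ : Fin (n + 1) => ℝ)).toLinearMap ?_
    rw [hcons]
    exact (volume_preserving_piFinSuccAbove (fun _ : Fin (n + 1) => ℝ) 0).symm

theorem euclideanSpace (n : ℕ) :
    PrekopaLeindler (volume : Measure (EuclideanSpace ℝ (Fin n))) :=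
  (pi n).of_measurePreserving (WithLp.linearEquiv 2 ℝ (Fin n → ℝ)).symm.toLinearMap
    (PiLp.volume_preserving_toLp (Fin n))

end PrekopaLeindler

theorem map_quantile_eq (μ : Measure ℝ) [IsProbabilityMeasure μ] {Q : ℝ → ℝ}
    (hQ : ∀ τ ∈ Ioo (0 : ℝ) 1, μ (Iic (Q τ)) = ENNReal.ofReal τ) :
    AEMeasurable Q (volume.restrict (Ioo 0 1)) ∧
      (volume.restrict (Ioo (0 : ℝ) 1)).map Q = μ := by
  have hmono : MonotoneOn Q (Ioo 0 1) := by
    intro τ hτ σ hσ hle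
    rcases hle.eq_or_lt with rfl | hlt
    · exact le_rfl
    by_contra! hcon
    have h : μ (Iic (Q σ)) ≤ μ (Iic (Q τ)) := measure_mono (Iic_subset_Iic.2 hcon.le)
    rw [hQ τ hτ, hQ σ hσ, ENNReal.ofReal_le_ofReal_iff hτ.1.le] at h
    exact absurd h (not_le.2 hlt)
  have hmeas : AEMeasurable Q (volume.restrict (Ioo 0 1)) :=
    aemeasurable_restrict_of_monotoneOn measurableSet_Ioo hmono
  refine ⟨hmeas, ?_⟩
  have : IsFiniteMeasure ((volume.restrict (Ioo (0 : ℝ) 1)).map Q) := inferInstance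
  refine Measure.ext_of_Iic _ _ fun a => ?_
  rw [Measure.map_apply_of_aemeasurable hmeas measurableSet_Iic,
    Measure.restrict_apply' measurableSet_Ioo]
  obtain ⟨c, hc⟩ : ∃ c, c = (μ (Iic a)).toReal := ⟨_, rfl⟩
  have hμc : μ (Iic a) = ENNReal.ofReal c := by rw [hc, ENNReal.ofReal_toReal (measure_ne_top _ _)]
  have hc0 : 0 ≤ c := hc ▸ ENNReal.toReal_nonneg
  have hc1 : c ≤ 1 := by
    have : μ (Iic a) ≤ 1 := prob_le_one
    rwa [hμc, ENNReal.ofReal_le_one] at this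
  rw [hμc]
  refine le_antisymm ?_ ?_
  · calc volume (Q ⁻¹' Iic a ∩ Ioo 0 1) ≤ volume (Ioc 0 c) := by
          refine measure_mono fun τ ⟨hτa, hτ⟩ => ⟨hτ.1, ?_⟩
          have h : μ (Iic (Q τ)) ≤ μ (Iic a) := measure_mono (Iic_subset_Iic.2 hτa)
          rwa [hQ τ hτ, hμc, ENNReal.ofReal_le_ofReal_iff hc0] at h
      _ = ENNReal.ofReal c := by simp
  · calc ENNReal.ofReal c = volume (Ioo 0 c) := by simp
      _ ≤ _ := by
          refine measure_mono fun τ hτ => ?_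
          have hτ1 : τ ∈ Ioo (0 : ℝ) 1 := ⟨hτ.1, hτ.2.trans_le hc1⟩
          refine ⟨?_, hτ1⟩
          by_contra hcon
          have h : μ (Iic a) ≤ μ (Iic (Q τ)) := measure_mono (Iic_subset_Iic.2 (not_le.1 hcon).le)
          rw [hQ τ hτ1, hμc, ENNReal.ofReal_le_ofReal_iff hτ.1.le] at h
          exact absurd hτ.2 (not_lt.2 h)

theorem exists_quantile (μ : Measure ℝ) [IsProbabilityMeasure μ] [NullSingletonClass μ] {τ : ℝ}
    (hτ : τ ∈ Ioo (0 : ℝ) 1) : ∃ s, μ (Iic s) = ENNReal.ofReal τ := by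
  have hcont : Continuous (ProbabilityTheory.cdf μ) := by
    refine continuous_iff_continuousAt.2 fun a => ?_
    rw [(ProbabilityTheory.monotone_cdf μ).continuousAt_iff_leftLim_eq_rightLim,
      StieltjesFunction.rightLim_eq]
    refine le_antisymm ((ProbabilityTheory.monotone_cdf μ).leftLim_le le_rfl) ?_
    have h := (ProbabilityTheory.cdf μ).measure_singleton a
    rw [ProbabilityTheory.measure_cdf, measure_singleton, eq_comm, ENNReal.ofReal_eq_zero] at h
    linarith
  obtain ⟨s, hs⟩ := mem_range_of_exists_le_of_exists_ge hcont
    (((ProbabilityTheory.tendsto_cdf_atBot μ).eventually (ge_mem_nhds hτ.1)).exists)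
    (((ProbabilityTheory.tendsto_cdf_atTop μ).eventually (le_mem_nhds hτ.2)).exists)
  exact ⟨s, by rw [← ProbabilityTheory.ofReal_cdf, hs]⟩

/-- Equality in the weighted arithmetic-geometric mean inequality under the integral sign: if
Hölder's inequality for `exp ∘ u` and `exp ∘ v` is an equality, then `v - u` is constant. -/
theorem ae_eq_add_const_of_holder_eq {α : Type*} [MeasurableSpace α] {ν : Measure α}
    [NeZero ν] {p q : ℝ} (hp : 0 < p) (hq : 0 < q) (hpq : p + q = 1) {u v : α → ℝ}
    (hu : Integrable (fun x => Real.exp (u x)) ν) (hv : Integrable (fun x => Real.exp (v x)) ν)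
    (huv : Integrable (fun x => Real.exp (p * u x + q * v x)) ν)
    (hle : (∫ x, Real.exp (u x) ∂ν) ^ p * (∫ x, Real.exp (v x) ∂ν) ^ q ≤
      ∫ x, Real.exp (p * u x + q * v x) ∂ν) :
    ∃ d : ℝ, ∀ᵐ x ∂ν, v x = u x + d := by
  obtain ⟨a, ha⟩ : ∃ a, a = ∫ x, Real.exp (u x) ∂ν := ⟨_, rfl⟩
  obtain ⟨b, hb⟩ : ∃ b, b = ∫ x, Real.exp (v x) ∂ν := ⟨_, rfl⟩
  have ha0 : 0 < a := ha ▸ integral_exp_pos hu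
  have hb0 : 0 < b := hb ▸ integral_exp_pos hv
  rw [← ha, ← hb] at hle
  have hc0 : 0 < a ^ p * b ^ q := by positivity
  have hgeom : ∀ x, Real.exp (p * u x + q * v x) / (a ^ p * b ^ q) =
      (Real.exp (u x) / a) ^ p * (Real.exp (v x) / b) ^ q := fun x => by
    rw [Real.div_rpow (Real.exp_nonneg _) ha0.le, Real.div_rpow (Real.exp_nonneg _) hb0.le,
      ← Real.exp_mul, ← Real.exp_mul, div_mul_div_comm, ← Real.exp_add, mul_comm p, mul_comm q]
  have hnonneg : 0 ≤ fun x => p * (Real.exp (u x) / a) + q * (Real.exp (v x) / b) -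
      Real.exp (p * u x + q * v x) / (a ^ p * b ^ q) := fun x => by
    have := Real.geom_mean_le_arith_mean2_weighted hp.le hq.le
      (p₁ := Real.exp (u x) / a) (p₂ := Real.exp (v x) / b) (by positivity) (by positivity) hpq
    simp only [Pi.zero_apply, hgeom]
    linarith
  have hi1 := (hu.div_const a).const_mul p
  have hi2 := (hv.div_const b).const_mul q
  have hi3 := huv.div_const (a ^ p * b ^ q)
  have hi12 : Integrable (fun x => p * (Real.exp (u x) / a) + q * (Real.exp (v x) / b)) ν :=
    hi1.add hi2
  have hint : ∫ x, p * (Real.exp (u x) / a) + q * (Real.exp (v x) / b) -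
      Real.exp (p * u x + q * v x) / (a ^ p * b ^ q) ∂ν = 0 := by
    refine le_antisymm ?_ (integral_nonneg hnonneg)
    rw [integral_sub hi12 hi3, integral_add hi1 hi2, integral_const_mul,
      integral_const_mul, integral_div, integral_div, integral_div, ← ha, ← hb, div_self ha0.ne',
      div_self hb0.ne']
    have : 1 ≤ (∫ x, Real.exp (p * u x + q * v x) ∂ν) / (a ^ p * b ^ q) := by
      rwa [one_le_div hc0]
    linarith
  rw [integral_eq_zero_iff_of_nonneg hnonneg (hi12.sub hi3)] at hint
  refine ⟨Real.log (b / a), hint.mono fun x hx => ?_⟩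
  have heq : Real.exp (u x) / a = Real.exp (v x) / b := by
    rw [← Real.geom_mean_eq_arith_mean2_weighted_iff_of_pos hp hq (by positivity) (by positivity)
      hpq, ← hgeom]
    simp only [Pi.zero_apply] at hx
    linarith
  have hexp : Real.exp (v x) = Real.exp (u x) * (b / a) := by
    field_simp at heq ⊢
    linarith
  rw [← Real.log_exp (v x), hexp, Real.log_mul (Real.exp_ne_zero _) (by positivity), Real.log_exp]

/-- The equality case of the one-dimensional Prékopa–Leindler inequality between atomless
probability measures. -/
theorem exists_map_add_eq_of_prekopaLeindler {p q : ℝ} (hp : 0 < p) (hq : 0 < q)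
    (hpq : p + q = 1) (μ₀ μ₁ μ : Measure ℝ) [IsProbabilityMeasure μ₀] [IsProbabilityMeasure μ₁]
    [IsProbabilityMeasure μ] [NullSingletonClass μ₀] [NullSingletonClass μ₁]
    (hexp₀ : Integrable Real.exp μ₀) (hexp₁ : Integrable Real.exp μ₁)
    (hPL : ∀ f g h : ℝ → ℝ≥0∞, Measurable f → Measurable g → Measurable h →
      (∀ x y, f x ^ p * g y ^ q ≤ h (p * x + q * y)) →
      (∫⁻ x, f x ∂μ₀) ^ p * (∫⁻ x, g x ∂μ₁) ^ q ≤ ∫⁻ x, h x ∂μ) :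
    ∃ d : ℝ, μ₁ = μ₀.map (· + d) := by
  have hset : ∀ A B C : Set ℝ, MeasurableSet A → MeasurableSet B → MeasurableSet C →
      (∀ x ∈ A, ∀ y ∈ B, p * x + q * y ∈ C) → μ₀ A ^ p * μ₁ B ^ q ≤ μ C := by
    intro A B C hA hB hC hABC
    have h := hPL (A.indicator 1) (B.indicator 1) (C.indicator 1) (measurable_one.indicator hA)
      (measurable_one.indicator hB) (measurable_one.indicator hC) fun x y => by
        by_cases hx : x ∈ A
        · by_cases hy : y ∈ B
          · simp [hx, hy, hABC x hx y hy]
          · simp [hy, hq]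
        · simp [hx, hp]
    rwa [lintegral_indicator_one hA, lintegral_indicator_one hB, lintegral_indicator_one hC] at h
  have hpow : ∀ τ : ℝ, 0 < τ →
      ENNReal.ofReal τ ^ p * ENNReal.ofReal τ ^ q = ENNReal.ofReal τ := fun τ hτ => by
    rw [← ENNReal.rpow_add _ _ (by simpa using hτ) ENNReal.ofReal_ne_top, hpq, ENNReal.rpow_one]
  have hchoose : ∀ (ρ : Measure ℝ) [IsProbabilityMeasure ρ] [NullSingletonClass ρ], ∃ Q : ℝ → ℝ,
      ∀ τ ∈ Ioo (0 : ℝ) 1, ρ (Iic (Q τ)) = ENNReal.ofReal τ := by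
    intro ρ _ _
    choose! Q hQ using fun τ (hτ : τ ∈ Ioo (0 : ℝ) 1) => exists_quantile ρ hτ
    exact ⟨Q, hQ⟩
  obtain ⟨Q₀, hQ₀⟩ := hchoose μ₀
  obtain ⟨Q₁, hQ₁⟩ := hchoose μ₁
  have hcompl : ∀ (ρ : Measure ℝ) [IsProbabilityMeasure ρ] (s : ℝ), ρ (Ioi s) = 1 - ρ (Iic s) := by
    intro ρ _ s
    rw [← compl_Iic, prob_compl_eq_one_sub measurableSet_Iic]
  have hQ : ∀ τ ∈ Ioo (0 : ℝ) 1, μ (Iic (p * Q₀ τ + q * Q₁ τ)) = ENNReal.ofReal τ := by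
    intro τ hτ
    have h1 := hset (Iic (Q₀ τ)) (Iic (Q₁ τ)) (Iic (p * Q₀ τ + q * Q₁ τ)) measurableSet_Iic
      measurableSet_Iic measurableSet_Iic fun x hx y hy => by
        simp only [mem_Iic] at *; gcongr
    have h2 := hset (Ioi (Q₀ τ)) (Ioi (Q₁ τ)) (Ioi (p * Q₀ τ + q * Q₁ τ)) measurableSet_Ioi
      measurableSet_Ioi measurableSet_Ioi fun x hx y hy => by
        simp only [mem_Ioi] at *; gcongr
    rw [hQ₀ τ hτ, hQ₁ τ hτ, hpow τ hτ.1] at h1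
    rw [hcompl, hcompl, hcompl, hQ₀ τ hτ, hQ₁ τ hτ, ← ENNReal.ofReal_one,
      ← ENNReal.ofReal_sub _ hτ.1.le, hpow _ (by linarith [hτ.2])] at h2
    refine le_antisymm ?_ h1
    obtain ⟨c, hc⟩ : ∃ c, c = (μ (Iic (p * Q₀ τ + q * Q₁ τ))).toReal := ⟨_, rfl⟩
    have hμc : μ (Iic (p * Q₀ τ + q * Q₁ τ)) = ENNReal.ofReal c := by
      rw [hc, ENNReal.ofReal_toReal (measure_ne_top _ _)]
    rw [hμc, ← ENNReal.ofReal_sub _ (hc ▸ ENNReal.toReal_nonneg)] at h2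
    rw [hμc]
    rw [ENNReal.ofReal_le_ofReal_iff'] at h2
    refine ENNReal.ofReal_le_ofReal ?_
    rcases h2 with h2 | h2 <;> linarith [hτ.2]
  obtain ⟨hm₀, hmap₀⟩ := map_quantile_eq μ₀ hQ₀
  obtain ⟨hm₁, hmap₁⟩ := map_quantile_eq μ₁ hQ₁
  obtain ⟨hm, hmap⟩ := map_quantile_eq μ hQ
  have hi₀ : Integrable (fun τ => Real.exp (Q₀ τ)) (volume.restrict (Ioo (0 : ℝ) 1)) := by
    rw [← hmap₀] at hexp₀; exact hexp₀.comp_aemeasurable hm₀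
  have hi₁ : Integrable (fun τ => Real.exp (Q₁ τ)) (volume.restrict (Ioo (0 : ℝ) 1)) := by
    rw [← hmap₁] at hexp₁; exact hexp₁.comp_aemeasurable hm₁
  have hi : Integrable (fun τ => Real.exp (p * Q₀ τ + q * Q₁ τ))
      (volume.restrict (Ioo (0 : ℝ) 1)) := by
    refine ((hi₀.const_mul p).add (hi₁.const_mul q)).mono'
      (Real.measurable_exp.comp_aemeasurable hm).aestronglyMeasurable (.of_forall fun τ => ?_)
    have := convexOn_exp.2 (mem_univ (Q₀ τ)) (mem_univ (Q₁ τ)) hp.le hq.le hpq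
    simpa [abs_of_pos (Real.exp_pos _)] using this
  have hlint : ∀ (ρ : Measure ℝ) (Q : ℝ → ℝ), AEMeasurable Q (volume.restrict (Ioo 0 1)) →
      (volume.restrict (Ioo (0 : ℝ) 1)).map Q = ρ →
      Integrable (fun τ => Real.exp (Q τ)) (volume.restrict (Ioo (0 : ℝ) 1)) →
      ∫⁻ x, ENNReal.ofReal (Real.exp x) ∂ρ = ENNReal.ofReal (∫ τ in Ioo 0 1, Real.exp (Q τ)) := by
    intro ρ Q hQm hQρ hQi
    rw [ofReal_integral_eq_lintegral_ofReal hQi (.of_forall fun _ => Real.exp_nonneg _), ← hQρ,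
      lintegral_map' (by fun_prop) hQm]
  have hholder := hPL (fun x => ENNReal.ofReal (Real.exp x)) (fun x => ENNReal.ofReal (Real.exp x))
    (fun x => ENNReal.ofReal (Real.exp x)) (by fun_prop) (by fun_prop) (by fun_prop)
    fun x y => by
      rw [ENNReal.ofReal_rpow_of_pos (Real.exp_pos _), ENNReal.ofReal_rpow_of_pos (Real.exp_pos _),
        ← ENNReal.ofReal_mul (by positivity), ← Real.exp_mul, ← Real.exp_mul, ← Real.exp_add,
        mul_comm x, mul_comm y]
  rw [hlint μ₀ Q₀ hm₀ hmap₀ hi₀, hlint μ₁ Q₁ hm₁ hmap₁ hi₁, hlint μ _ hm hmap hi,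
    ENNReal.ofReal_rpow_of_nonneg (integral_nonneg fun _ => Real.exp_nonneg _) hp.le,
    ENNReal.ofReal_rpow_of_nonneg (integral_nonneg fun _ => Real.exp_nonneg _) hq.le,
    ← ENNReal.ofReal_mul (Real.rpow_nonneg (integral_nonneg fun _ => Real.exp_nonneg _) _),
    ENNReal.ofReal_le_ofReal_iff (integral_nonneg fun _ => Real.exp_nonneg _)] at hholder
  have : NeZero (volume.restrict (Ioo (0 : ℝ) 1)) := ⟨by simp⟩
  obtain ⟨d, hd⟩ := ae_eq_add_const_of_holder_eq hp hq hpq hi₀ hi₁ hi hholder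
  refine ⟨d, ?_⟩
  rw [← hmap₀, ← hmap₁, AEMeasurable.map_map_of_aemeasurable (by fun_prop) hm₀]
  exact Measure.map_congr hd

section ConvexMeasure

variable {E : Type*} [NormedAddCommGroup E] [NormedSpace ℝ E] [FiniteDimensional ℝ E]
  [MeasurableSpace E] [BorelSpace E] {μ : Measure E} [μ.IsAddHaarMeasure]

theorem Convex.interior_nonempty_of_measure_ne_zero {A : Set E} (hA : Convex ℝ A)
    (hμA : μ A ≠ 0) : (interior A).Nonempty := by
  by_contra hint
  refine hμA (measure_mono_null (fun x hx => ?_) (hA.addHaar_frontier μ))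
  exact ⟨subset_closure hx, fun h => hint ⟨x, h⟩⟩

theorem Convex.measure_inter_isOpen_pos {A U : Set E} (hA : Convex ℝ A) (hμA : μ A ≠ 0)
    (hU : IsOpen U) {x : E} (hxA : x ∈ A) (hxU : x ∈ U) : 0 < μ (A ∩ U) := by
  have hx : x ∈ closure (interior A) := by
    rw [hA.closure_interior_eq_closure_of_nonempty_interior
      (hA.interior_nonempty_of_measure_ne_zero hμA)]
    exact subset_closure hxA
  have hne : (U ∩ interior A).Nonempty := mem_closure_iff.1 hx U hU hxU
  exact ((hU.inter isOpen_interior).measure_pos μ hne).trans_le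
    (measure_mono fun y hy => ⟨interior_subset hy.2, hy.1⟩)

theorem Convex.eq_of_isClosed_subset_of_measure_le {A B : Set E} (hA : Convex ℝ A)
    (hB : IsClosed B) (hBA : B ⊆ A) (hle : μ A ≤ μ B) (hμA : μ A ≠ 0) (hμB : μ B ≠ ∞) :
    A = B := by
  refine (hBA.antisymm fun x hx => ?_).symm
  by_contra hxB
  have hpos := hA.measure_inter_isOpen_pos hμA hB.isOpen_compl hx hxB
  rw [← sdiff_eq, measure_sdiff hBA hB.measurableSet.nullMeasurableSet hμB,
    tsub_eq_zero_of_le hle] at hpos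
  exact hpos.false

theorem Convex.subset_vadd_of_measure_halfSpace {A B : Set E} (hA : Convex ℝ A)
    (hB : Convex ℝ B) (hBc : IsClosed B) (hμA : μ A ≠ 0) (hBne : B.Nonempty) (c : E)
    (h : ∀ (l : StrongDual ℝ E) (s : ℝ), l ≠ 0 → μ (B ∩ l ⁻¹' Ioi s) = 0 →
      μ (A ∩ l ⁻¹' Ioi (s + l c)) = 0) : A ⊆ c +ᵥ B := by
  intro x hx
  rw [mem_vadd_set_iff_neg_vadd_mem]
  by_contra hxB
  obtain ⟨l, u, hlB, hlx⟩ := geometric_hahn_banach_closed_point hB hBc hxB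
  have hl : l ≠ 0 := by
    rintro rfl
    obtain ⟨b, hb⟩ := hBne
    have := hlB b hb
    simp at this hlx
    linarith
  have hempty : B ∩ l ⁻¹' Ioi u = ∅ :=
    eq_empty_of_forall_notMem fun y hy => absurd (hlB y hy.1) (not_lt.2 (le_of_lt hy.2))
  refine (hA.measure_inter_isOpen_pos hμA (isOpen_Ioi.preimage l.continuous) hx ?_).ne'
    (h l u hl (by rw [hempty, measure_empty]))
  simp only [vadd_eq_add, map_add, map_neg] at hlx
  simp only [mem_preimage, mem_Ioi]
  linarith

/-- In the equality case of the Brunn–Minkowski inequality for sets of equal measure, the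
marginals along any linear functional are translates of each other. -/
theorem PrekopaLeindler.exists_map_restrict_eq (hμ : PrekopaLeindler μ) {p q : ℝ} (hp : 0 < p)
    (hq : 0 < q) (hpq : p + q = 1) {A₀ A₁ M : Set E} (hA₀ : IsCompact A₀) (hA₁ : IsCompact A₁)
    (hM : MeasurableSet M) (hsum : ∀ x ∈ A₀, ∀ y ∈ A₁, p • x + q • y ∈ M)
    (h₁ : μ A₁ = μ A₀) (hMle : μ M ≤ μ A₀) (h₀ : μ A₀ ≠ 0) (l : StrongDual ℝ E) (hl : l ≠ 0) :
    ∃ d : ℝ, (μ.restrict A₁).map l = ((μ.restrict A₀).map l).map (· + d) := by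
  obtain ⟨V, hV⟩ : ∃ V, V = μ A₀ := ⟨_, rfl⟩
  have hVt : V ≠ ∞ := hV ▸ hA₀.measure_lt_top.ne
  rw [← hV] at h₁ hMle h₀
  have hpow : ∀ v : ℝ≥0∞, v ≠ 0 → v ≠ ∞ → v ^ p * v ^ q = v := fun v hv0 hvt => by
    rw [← ENNReal.rpow_add _ _ hv0 hvt, hpq, ENNReal.rpow_one]
  have hPL := @setLIntegral_rpow_mul_le E _ _ _ μ hμ p q hp hq hpq A₀ A₁ M
    hA₀.measurableSet hA₁.measurableSet hM hsum
  have hMV : μ M = V := by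
    refine le_antisymm hMle ?_
    have h := hPL (f := 1) (g := 1) (h := 1) measurable_one measurable_one measurable_one (by simp)
    simpa [← hV, h₁, hpow V h₀ hVt] using h
  have hVi0 : V⁻¹ ≠ 0 := ENNReal.inv_ne_zero.2 hVt
  have hVit : V⁻¹ ≠ ∞ := ENNReal.inv_ne_top.2 h₀
  have hprob : ∀ A : Set E, μ A = V →
      IsProbabilityMeasure ((V⁻¹ • μ.restrict A).map l) := fun A hA => by
    have : IsProbabilityMeasure (V⁻¹ • μ.restrict A) :=
      ⟨by simp [hA, ENNReal.inv_mul_cancel h₀ hVt]⟩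
    exact Measure.isProbabilityMeasure_map l.continuous.aemeasurable
  have hsurj : Function.Surjective l.toLinearMap :=
    LinearMap.surjective (fun h => hl (ContinuousLinearMap.coe_injective h))
  have hnull : ∀ A : Set E, NullSingletonClass ((V⁻¹ • μ.restrict A).map l) := fun A => by
    refine ⟨fun s => ?_⟩
    obtain ⟨c, -, hc⟩ := l.toLinearMap.exists_map_addHaar_eq_smul_addHaar μ volume hsurj
    have hs : μ (l ⁻¹' {s}) = 0 := by
      have h := congrArg (fun ρ : Measure ℝ => ρ {s}) hc
      simpa [Measure.map_apply l.continuous.measurable (measurableSet_singleton s)] using h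
    rw [Measure.map_apply l.continuous.measurable (measurableSet_singleton s)]
    simp [measure_mono_null (show l ⁻¹' {s} ∩ A ⊆ l ⁻¹' {s} from inter_subset_left) hs,
      Measure.restrict_apply (l.continuous.measurable (measurableSet_singleton s))]
  have hexp : ∀ A : Set E, IsCompact A → Integrable Real.exp ((V⁻¹ • μ.restrict A).map l) := by
    intro A hA
    rw [integrable_map_measure Real.continuous_exp.aestronglyMeasurable
      l.continuous.aemeasurable]
    exact ((Real.continuous_exp.comp l.continuous).continuousOn.integrableOn_compact
      hA).smul_measure hVit
  have hlint : ∀ (A : Set E) (f : ℝ → ℝ≥0∞), Measurable f →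
      ∫⁻ x, f x ∂((V⁻¹ • μ.restrict A).map l) = V⁻¹ * ∫⁻ x in A, f (l x) ∂μ := by
    intro A f hf
    rw [lintegral_map hf l.continuous.measurable, lintegral_smul_measure, smul_eq_mul]
  have := hprob A₀ hV.symm
  have := hprob A₁ h₁
  have := hprob M hMV
  have := hnull A₀
  have := hnull A₁
  obtain ⟨d, hd⟩ := exists_map_add_eq_of_prekopaLeindler hp hq hpq ((V⁻¹ • μ.restrict A₀).map l)
    ((V⁻¹ • μ.restrict A₁).map l) ((V⁻¹ • μ.restrict M).map l) (hexp A₀ hA₀) (hexp A₁ hA₁) (by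
      intro f g h hf hg hh hfgh
      rw [hlint A₀ f hf, hlint A₁ g hg, hlint M h hh, ENNReal.mul_rpow_of_nonneg _ _ hp.le,
        ENNReal.mul_rpow_of_nonneg _ _ hq.le, mul_mul_mul_comm, hpow _ hVi0 hVit]
      gcongr
      exact hPL (hf.comp l.continuous.measurable) (hg.comp l.continuous.measurable)
        (hh.comp l.continuous.measurable) fun x y => by simpa using hfgh (l x) (l y))
  refine ⟨d, ?_⟩
  rw [Measure.map_smul, Measure.map_smul, Measure.map_smul] at hd
  have h := congrArg (fun ρ => V • ρ) hd
  simpa [smul_smul, ENNReal.mul_inv_cancel h₀ hVt] using h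

/-- The equality case of the Brunn–Minkowski inequality for convex bodies of equal measure. -/
theorem PrekopaLeindler.exists_eq_vadd (hμ : PrekopaLeindler μ) {p q : ℝ} (hp : 0 < p)
    (hq : 0 < q) (hpq : p + q = 1) {A₀ A₁ M : Set E} (hA₀ : IsCompact A₀) (hA₁ : IsCompact A₁)
    (hconv₀ : Convex ℝ A₀) (hconv₁ : Convex ℝ A₁)
    (hM : MeasurableSet M) (hsum : ∀ x ∈ A₀, ∀ y ∈ A₁, p • x + q • y ∈ M)
    (h₁ : μ A₁ = μ A₀) (hMle : μ M ≤ μ A₀) (h₀ : μ A₀ ≠ 0) :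
    ∃ c : E, A₁ = c +ᵥ A₀ := by
  obtain ⟨V, hV⟩ : ∃ V, V = μ.real A₀ := ⟨_, rfl⟩
  have hV0 : V ≠ 0 := hV ▸ (ENNReal.toReal_pos h₀ hA₀.measure_lt_top.ne).ne'
  obtain ⟨c, hc⟩ : ∃ c, c = V⁻¹ • ((∫ x in A₁, x ∂μ) - ∫ x in A₀, x ∂μ) := ⟨_, rfl⟩
  have hid : ∀ A : Set E, IsCompact A → Integrable (fun x : E => x) (μ.restrict A) :=
    fun A hA => continuous_id.continuousOn.integrableOn_compact hA
  have hshift : ∀ l : StrongDual ℝ E, l ≠ 0 → ∀ s : ℝ,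
      μ (A₁ ∩ l ⁻¹' Ioi (s + l c)) = μ (A₀ ∩ l ⁻¹' Ioi s) := by
    intro l hl s
    obtain ⟨d, hd⟩ := hμ.exists_map_restrict_eq hp hq hpq hA₀ hA₁ hM hsum h₁ hMle h₀ l hl
    have hmean : ∫ x in A₁, l x ∂μ = (∫ x in A₀, l x ∂μ) + V * d := by
      have h := congrArg (fun ρ : Measure ℝ => ∫ x, x ∂ρ) hd
      rw [integral_map l.continuous.aemeasurable (by fun_prop), integral_map (by fun_prop)
        (by fun_prop), integral_map l.continuous.aemeasurable (by fun_prop),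
        integral_add (l.integrable_comp (hid A₀ hA₀)) (integrable_const_iff.2 (.inr
          ⟨by simpa using hA₀.measure_lt_top⟩))] at h
      simpa [← hV] using h
    have hlc : l c = d := by
      rw [hc, map_smul, map_sub, ← l.integral_comp_comm (hid A₁ hA₁),
        ← l.integral_comp_comm (hid A₀ hA₀), hmean, smul_eq_mul]
      field_simp
      ring
    have h := congrArg (fun ρ : Measure ℝ => ρ (Ioi (s + d))) hd
    rw [Measure.map_apply l.continuous.measurable measurableSet_Ioi,
      Measure.map_apply (by fun_prop) measurableSet_Ioi,
      Measure.map_apply l.continuous.measurable (by measurability),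
      Measure.restrict_apply' hA₁.measurableSet, Measure.restrict_apply' hA₀.measurableSet] at h
    rw [hlc, inter_comm, h, inter_comm]
    simp
  have hne₀ : A₀.Nonempty := nonempty_of_measure_ne_zero h₀
  have hne₁ : A₁.Nonempty := nonempty_of_measure_ne_zero (h₁ ▸ h₀)
  refine ⟨c, Subset.antisymm ?_ ?_⟩
  · exact hconv₁.subset_vadd_of_measure_halfSpace hconv₀ hA₀.isClosed (h₁ ▸ h₀) hne₀ c
      fun l s hl h => by rw [hshift l hl, h]
  · have h := hconv₀.subset_vadd_of_measure_halfSpace (μ := μ) hconv₁ hA₁.isClosed h₀ hne₁ (-c)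
      fun l s hl h => by
        rw [← hshift l hl]
        simpa using h
    exact vadd_set_subset_iff_subset_neg_vadd_set.2 h

end ConvexMeasure

section ConvexBodies

variable {E : Type*} [NormedAddCommGroup E] [NormedSpace ℝ E]

theorem Convex.ball_subset_of_ball_subset {A : Set E} (hA : Convex ℝ A) {x y : E} {r s : ℝ}
    (hball : Metric.ball x r ⊆ A) (hy : y ∈ A) (hs0 : 0 ≤ s) (hs : s ≤ 1 / 2) :
    Metric.ball (x + s • (y - x)) (r / 2) ⊆ A := by
  intro z hz
  have hs1 : 0 < 1 - s := by linarith
  have hx' : x + (1 - s)⁻¹ • (z - (x + s • (y - x))) ∈ A := by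
    refine hball ?_
    rw [mem_ball_iff_norm] at hz ⊢
    rw [add_sub_cancel_left, norm_smul, Real.norm_of_nonneg (inv_nonneg.2 hs1.le),
      inv_mul_lt_iff₀ hs1]
    nlinarith [norm_nonneg (z - (x + s • (y - x)))]
  have h := hA hx' hy hs1.le hs0 (by ring)
  rw [smul_add, smul_inv_smul₀ hs1.ne'] at h
  convert h using 1
  module

/-- The Rådström cancellation law for a compact set, applied to a point. -/
theorem Convex.mem_of_forall_add_mem_add {A C : Set E} (hA : IsCompact A) (hAne : A.Nonempty)
    (hC : Convex ℝ C) (hCc : IsClosed C) {x : E} (h : ∀ a ∈ A, x + a ∈ C + A) : x ∈ C := by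
  by_contra hx
  obtain ⟨l, u, hlC, hlx⟩ := geometric_hahn_banach_closed_point hC hCc hx
  obtain ⟨a, ha, hmax⟩ := hA.exists_isMaxOn hAne l.continuous.continuousOn
  obtain ⟨c, hc, a', ha', hsum⟩ := h a ha
  have h1 : l a' ≤ l a := hmax ha'
  have h2 := hlC c hc
  have h3 := congrArg l hsum
  simp only [map_add] at h3
  linarith

theorem eq_smul_of_concave_family {A : Set E} (hA : IsCompact A) (hAconv : Convex ℝ A)
    (hAne : A.Nonempty) {D : ℝ → Set E} {l : ℝ}
    (hD : ∀ s s' a b : ℝ, 0 ≤ a → 0 ≤ b → a + b = 1 → ∀ z ∈ D s, ∀ z' ∈ D s',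
      a • z + b • z' ∈ D (a * s + b * s'))
    (h0 : D 0 = A) (h1 : D 1 = (1 + l) • A) (hneg : D (-1) = (1 - l) • A) {t : ℝ}
    (ht : t ∈ Icc (0 : ℝ) 1) : D t = (1 + t * l) • A := by
  refine Subset.antisymm (fun z hz => ?_) ?_
  · refine Convex.mem_of_forall_add_mem_add (hA.smul (t * (1 - l))) hAne.smul_set
      (hAconv.smul _) (hA.smul _).isClosed ?_
    rintro _ ⟨a, ha, rfl⟩
    have ht1 : 0 < 1 + t := by linarith [ht.1]
    have hmem := hD t (-1) (1 / (1 + t)) (t / (1 + t)) (by positivity)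
      (div_nonneg ht.1 ht1.le) (by field_simp) z hz ((1 - l) • a)
      (by rw [hneg]; exact smul_mem_smul_set ha)
    rw [show 1 / (1 + t) * t + t / (1 + t) * -1 = 0 by ring, h0] at hmem
    refine ⟨_, smul_mem_smul_set hmem, _, smul_mem_smul_set hmem, ?_⟩
    simp only
    rw [← add_smul, show 1 + t * l + t * (1 - l) = 1 + t by ring, smul_add, smul_smul, smul_smul,
      mul_one_div_cancel ht1.ne', mul_div_cancel₀ _ ht1.ne', one_smul, smul_smul]
  · rintro _ ⟨a, ha, rfl⟩
    have hmem := hD 0 1 (1 - t) t (by linarith [ht.2]) ht.1 (by ring) a (h0 ▸ ha) ((1 + l) • a)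
      (by rw [h1]; exact smul_mem_smul_set ha)
    convert hmem using 1
    · ring_nf
    · module

variable [FiniteDimensional ℝ E] [MeasurableSpace E] [BorelSpace E] {μ : Measure E}
  [μ.IsAddHaarMeasure]

theorem Convex.isBounded_of_measure {A : Set E} (hA : Convex ℝ A) (h0 : μ A ≠ 0)
    (htop : μ A ≠ ∞) : Bornology.IsBounded A := by
  obtain ⟨x, hx⟩ := hA.interior_nonempty_of_measure_ne_zero h0
  obtain ⟨r, hr, hball⟩ := Metric.isOpen_iff.1 isOpen_interior x hx
  replace hball := hball.trans interior_subset
  by_contra hunb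
  have hm0 : μ (Metric.ball 0 (r / 2)) ≠ 0 := (Metric.measure_ball_pos μ _ (by positivity)).ne'
  obtain ⟨N, hN⟩ := ENNReal.exists_nat_mul_gt hm0 htop
  rcases Nat.eq_zero_or_pos N with rfl | hNpos
  · simp at hN
  have hN0 : (0 : ℝ) < N := by exact_mod_cast hNpos
  obtain ⟨y, hy, hyx⟩ : ∃ y ∈ A, 2 * N * r ≤ ‖y - x‖ := by
    by_contra! hcon
    exact hunb ((Metric.isBounded_ball (x := x) (r := 2 * N * r)).subset fun y hy =>
      mem_ball_iff_norm.2 (hcon y hy))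
  refine absurd hN (not_lt.2 ?_)
  have hdisj : (↑(Finset.range N) : Set ℕ).PairwiseDisjoint
      fun k : ℕ => Metric.ball (x + ((k : ℝ) / (2 * N)) • (y - x)) (r / 2) := by
    intro j _ k _ hjk
    refine Metric.ball_disjoint_ball ?_
    rw [dist_eq_norm, add_sub_add_left_eq_sub, ← sub_smul, norm_smul, ← sub_div, norm_div,
      Real.norm_of_nonneg (by positivity : (0 : ℝ) ≤ 2 * N), add_halves,
      div_mul_eq_mul_div, le_div_iff₀ (by positivity)]
    have h1 : (1 : ℝ) ≤ ‖(j : ℝ) - k‖ := by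
      have : (1 : ℤ) ≤ |(j : ℤ) - k| := Int.one_le_abs (sub_ne_zero.2 (by exact_mod_cast hjk))
      rw [Real.norm_eq_abs]
      exact_mod_cast this
    nlinarith [norm_nonneg (y - x)]
  calc (N : ℝ≥0∞) * μ (Metric.ball 0 (r / 2))
      = ∑ k ∈ Finset.range N, μ (Metric.ball (x + ((k : ℝ) / (2 * N)) • (y - x)) (r / 2)) := by
        simp [Measure.addHaar_ball_center]
    _ = μ (⋃ k ∈ Finset.range N, Metric.ball (x + ((k : ℝ) / (2 * N)) • (y - x)) (r / 2)) :=
        (measure_biUnion_finset hdisj fun _ _ => measurableSet_ball).symm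
    _ ≤ μ A := by
        refine measure_mono (iUnion₂_subset fun k hk => ?_)
        refine hA.ball_subset_of_ball_subset hball hy (by positivity) ?_
        rw [div_le_div_iff₀ (by positivity) two_pos]
        have : (k : ℝ) ≤ N := by exact_mod_cast (Finset.mem_range.1 hk).le
        linarith

theorem measure_smul_of_nonneg {r : ℝ} (hr : 0 ≤ r) (A : Set E) :
    μ (r • A) = ENNReal.ofReal (r ^ Module.finrank ℝ E) * μ A := by
  rw [Measure.addHaar_smul, abs_of_nonneg (by positivity)]

theorem exists_eq_vadd_smul_of_singleton {X Y A : Set E} (hXne : X.Nonempty) (hY : IsCompact Y)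
    (hA : Convex ℝ A) (hμA : μ A ≠ 0) (hsum : ∀ x ∈ X, ∀ y ∈ Y, (1 / 2 : ℝ) • (x + y) ∈ A)
    (hμY : μ Y = ENNReal.ofReal (2 ^ Module.finrank ℝ E) * μ A) :
    ∃ v : E, X = v +ᵥ (0 : ℝ) • A ∧ Y = -v +ᵥ (2 : ℝ) • A := by
  have hAne : A.Nonempty := nonempty_of_measure_ne_zero hμA
  have hcompact : ∀ x : E, IsCompact ((1 / 2 : ℝ) • x +ᵥ (1 / 2 : ℝ) • Y) := fun x =>
    (hY.smul (1 / 2 : ℝ)).vadd ((1 / 2 : ℝ) • x)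
  have hAY : ∀ x ∈ X, A = (1 / 2 : ℝ) • x +ᵥ (1 / 2 : ℝ) • Y := by
    intro x hx
    refine hA.eq_of_isClosed_subset_of_measure_le (μ := μ) (hcompact x).isClosed ?_ ?_ hμA
      (hcompact x).measure_lt_top.ne
    · rintro _ ⟨_, ⟨y, hy, rfl⟩, rfl⟩
      simpa using hsum x hx y hy
    · rw [measure_vadd, measure_smul_of_nonneg (by norm_num), hμY, ← mul_assoc,
        ← ENNReal.ofReal_mul (by positivity), ← mul_pow]
      norm_num
  obtain ⟨v, hv⟩ := hXne
  refine ⟨v, ?_, ?_⟩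
  · rw [zero_smul_set hAne, singleton_zero.symm, vadd_set_singleton, vadd_eq_add, add_zero]
    refine (eq_singleton_iff_unique_mem.2 ⟨hv, fun x hx => ?_⟩)
    have hYne : Y.Nonempty := by
      by_contra hY0
      rw [not_nonempty_iff_eq_empty.1 hY0] at hAY
      exact hAne.ne_empty (by simpa using hAY v hv)
    have hmem := Convex.mem_of_forall_add_mem_add (hY.smul (1 / 2 : ℝ)) hYne.smul_set
      (convex_singleton ((1 / 2 : ℝ) • v)) isClosed_singleton (x := (1 / 2 : ℝ) • x)
      fun a ha => by
        rw [singleton_add, image_add_left, mem_preimage]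
        have : (1 / 2 : ℝ) • x + a ∈ (1 / 2 : ℝ) • v +ᵥ (1 / 2 : ℝ) • Y := by
          rw [← hAY v hv, hAY x hx]
          exact vadd_mem_vadd_set ha
        rwa [mem_vadd_set_iff_neg_vadd_mem] at this
    exact smul_right_injective E (by norm_num : (1 / 2 : ℝ) ≠ 0) hmem
  · ext z
    rw [mem_vadd_set_iff_neg_vadd_mem, mem_smul_set_iff_inv_smul_mem₀ two_ne_zero, hAY v hv,
      mem_vadd_set_iff_neg_vadd_mem, mem_smul_set_iff_inv_smul_mem₀ (by norm_num)]
    simp only [vadd_eq_add]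
    rw [show (1 / 2 : ℝ)⁻¹ • (-((1 / 2 : ℝ) • v) + (2 : ℝ)⁻¹ • (- -v + z)) = z by module]

/-- The equality case of the Brunn–Minkowski inequality for two compact convex sets, one of
which may be degenerate. -/
theorem PrekopaLeindler.exists_eq_vadd_smul (hμ : PrekopaLeindler μ) {X Y A : Set E}
    (hX : IsCompact X) (hY : IsCompact Y) (hXc : Convex ℝ X) (hYc : Convex ℝ Y)
    (hXne : X.Nonempty) (hYne : Y.Nonempty) (hA : Convex ℝ A) (hAcl : IsClosed A)
    (hμA : μ A ≠ 0) (hsum : ∀ x ∈ X, ∀ y ∈ Y, (1 / 2 : ℝ) • (x + y) ∈ A) {α β : ℝ}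
    (hα : 0 ≤ α) (hβ : 0 ≤ β) (hαβ : α + β = 2)
    (hμX : μ X = ENNReal.ofReal (α ^ Module.finrank ℝ E) * μ A)
    (hμY : μ Y = ENNReal.ofReal (β ^ Module.finrank ℝ E) * μ A) :
    ∃ v : E, X = v +ᵥ α • A ∧ Y = -v +ᵥ β • A := by
  rcases hα.eq_or_lt with rfl | hα
  · obtain rfl : β = 2 := by linarith
    exact exists_eq_vadd_smul_of_singleton hXne hY hA hμA hsum hμY
  rcases hβ.eq_or_lt with rfl | hβ
  · obtain rfl : α = 2 := by linarith
    obtain ⟨v, hv1, hv2⟩ := exists_eq_vadd_smul_of_singleton (X := Y) (Y := X) hYne hX hA hμA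
      (fun x hx y hy => by rw [add_comm]; exact hsum y hy x hx) hμX
    exact ⟨-v, hv2, by rwa [neg_neg]⟩
  have hscale : ∀ (Z : Set E) (γ : ℝ), 0 < γ →
      μ Z = ENNReal.ofReal (γ ^ Module.finrank ℝ E) * μ A → μ (γ⁻¹ • Z) = μ A := by
    intro Z γ hγ hZ
    rw [measure_smul_of_nonneg (by positivity), hZ, ← mul_assoc,
      ← ENNReal.ofReal_mul (by positivity), ← mul_pow, inv_mul_cancel₀ hγ.ne', one_pow,
      ENNReal.ofReal_one, one_mul]
  have hmemsum : ∀ x ∈ α⁻¹ • X, ∀ y ∈ β⁻¹ • Y, (α / 2) • x + (β / 2) • y ∈ A := by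
    rintro _ ⟨x, hx, rfl⟩ _ ⟨y, hy, rfl⟩
    convert hsum x hx y hy using 1
    simp only [smul_smul, smul_add]
    congr 2 <;> field_simp
  have hX' := hscale X α hα hμX
  have hY' := hscale Y β hβ hμY
  obtain ⟨c, hc⟩ := hμ.exists_eq_vadd (half_pos hα) (half_pos hβ) (by linarith) (hX.smul α⁻¹)
    (hY.smul β⁻¹) (hXc.smul _) (hYc.smul _) hAcl.measurableSet hmemsum (hY'.trans hX'.symm) hX'.ge
    (hX' ▸ hμA)
  have hcompact : IsCompact ((β / 2) • c +ᵥ α⁻¹ • X) := (hX.smul α⁻¹).vadd ((β / 2) • c)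
  have hAX : A = (β / 2) • c +ᵥ α⁻¹ • X := by
    refine hA.eq_of_isClosed_subset_of_measure_le (μ := μ) hcompact.isClosed ?_
      (by rw [measure_vadd, hX']) hμA hcompact.measure_lt_top.ne
    rintro _ ⟨a, ha, rfl⟩
    convert hmemsum a ha (c +ᵥ a) (hc ▸ vadd_mem_vadd_set ha) using 1
    simp only [vadd_eq_add, smul_add]
    rw [← add_assoc, add_comm ((α / 2) • a), add_assoc, ← add_smul, ← add_div, hαβ,
      div_self two_ne_zero, one_smul]
  have hmemX : ∀ z, z ∈ α⁻¹ • X ↔ z + (β / 2) • c ∈ A := fun z => by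
    rw [hAX, mem_vadd_set_iff_neg_vadd_mem, vadd_eq_add, add_comm z, neg_add_cancel_left]
  refine ⟨-((α * β / 2) • c), ?_, ?_⟩ <;> ext z
  · rw [mem_vadd_set_iff_neg_vadd_mem, mem_smul_set_iff_inv_smul_mem₀ hα.ne',
      ← smul_mem_smul_set_iff₀ (inv_ne_zero hα.ne'), hmemX, vadd_eq_add, neg_neg, smul_add,
      smul_smul, add_comm, show α⁻¹ * (α * β / 2) = β / 2 by field_simp]
  · rw [mem_vadd_set_iff_neg_vadd_mem, mem_smul_set_iff_inv_smul_mem₀ hβ.ne',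
      ← smul_mem_smul_set_iff₀ (inv_ne_zero hβ.ne'), hc, mem_vadd_set_iff_neg_vadd_mem, hmemX,
      vadd_eq_add, vadd_eq_add, neg_neg, smul_add, smul_neg, smul_smul,
      show β⁻¹ * (α * β / 2) = 1 - β / 2 by field_simp; linarith]
    rw [show -c + β⁻¹ • z + (β / 2) • c = -((1 - β / 2) • c) + β⁻¹ • z by module]

end ConvexBodies

/-- Lemma 2.3 (Consequences of the equality conditions): if the `1/n`-th power of the cross
covariogram is affine on the segment from `-w` to `w` with positive midpoint value, then
there exist `v` and `λ ∈ [-1,1]` such that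
`(1 + tλ)(K ∩ L) = (K - tv) ∩ (L + t(w - v))` for all `t ∈ [-1,1]`. -/
theorem covariogram_affine_segment_consequence
    (n : ℕ) (hn : 1 < n)
    (K L : Set (EuclideanSpace ℝ (Fin n)))
    (hKne : K.Nonempty) (hKclosed : IsClosed K) (hKconv : Convex ℝ K)
    (hLne : L.Nonempty) (hLclosed : IsClosed L) (hLconv : Convex ℝ L)
    (g : EuclideanSpace ℝ (Fin n) → ℝ)
    (hg : ∀ x, g x = (volume (K ∩ (x +ᵥ L))).toReal)
    (a : EuclideanSpace ℝ (Fin n))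
    (hpos : 0 < volume (K ∩ (a +ᵥ L)))
    (hfin : volume (K ∩ (a +ᵥ L)) < ⊤)
    (w : EuclideanSpace ℝ (Fin n)) (hw : w ≠ 0)
    (hwsupp : w ∈ K + -L) (hwsupp' : -w ∈ K + -L)
    (hmid : g 0 ^ (1 / (n : ℝ))
      = (1 / 2) * (g (-w) ^ (1 / (n : ℝ)) + g w ^ (1 / (n : ℝ))))
    (hmidpos : 0 < g 0 ^ (1 / (n : ℝ))) :
    ∃ v : EuclideanSpace ℝ (Fin n), ∃ l : ℝ, l ∈ Icc (-1 : ℝ) 1 ∧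
      ∀ t ∈ Icc (-1 : ℝ) 1,
        (1 + t * l) • (K ∩ L) = ((-(t • v)) +ᵥ K) ∩ ((t • (w - v)) +ᵥ L) := by
  have hn0 : (n : ℝ) ≠ 0 := by exact_mod_cast (by omega : n ≠ 0)
  have hdim : Module.finrank ℝ (EuclideanSpace ℝ (Fin n)) = n := by simp
  have hg_nonneg : ∀ x, 0 ≤ g x := fun x => hg x ▸ ENNReal.toReal_nonneg
  obtain ⟨A, hAdef⟩ : ∃ A, A = K ∩ L := ⟨_, rfl⟩
  have hgA : g 0 = (volume A).toReal := by rw [hg, zero_vadd, hAdef]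
  have hg0 : 0 < g 0 := by
    refine (hg_nonneg 0).lt_of_ne fun h => ?_
    rw [← h, Real.zero_rpow (by positivity)] at hmidpos
    exact hmidpos.false
  have hμA : volume A ≠ 0 ∧ volume A ≠ ⊤ := by
    rw [hgA, ENNReal.toReal_pos_iff] at hg0
    exact ⟨hg0.1.ne', hg0.2.ne⟩
  have hAconv : Convex ℝ A := hAdef ▸ hKconv.inter hLconv
  have hA : IsCompact A := Metric.isCompact_of_isClosed_isBounded
    (hAdef ▸ hKclosed.inter hLclosed) (hAconv.isBounded_of_measure hμA.1 hμA.2)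
  have hslice_closed : ∀ x : EuclideanSpace ℝ (Fin n), IsClosed (K ∩ (x +ᵥ L)) := fun x =>
    hKclosed.inter (hLclosed.vadd x)
  have hslice_conv : ∀ x : EuclideanSpace ℝ (Fin n), Convex ℝ (K ∩ (x +ᵥ L)) := fun x =>
    hKconv.inter (hLconv.vadd x)
  have hslice_ne : ∀ x ∈ K + -L, (K ∩ (x +ᵥ L)).Nonempty := by
    rintro _ ⟨k, hk, m, hm, rfl⟩
    refine ⟨k, hk, ?_⟩
    rw [mem_vadd_set_iff_neg_vadd_mem]
    simpa using hm
  have hsum : ∀ w' : EuclideanSpace ℝ (Fin n), ∀ x ∈ K ∩ (w' +ᵥ L), ∀ y ∈ K ∩ (-w' +ᵥ L),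
      (1 / 2 : ℝ) • (x + y) ∈ A := by
    rintro w' x ⟨hxK, hxL⟩ y ⟨hyK, hyL⟩
    rw [mem_vadd_set_iff_neg_vadd_mem, vadd_eq_add] at hxL hyL
    rw [hAdef]
    refine ⟨?_, ?_⟩
    · convert hKconv hxK hyK (by norm_num : (0 : ℝ) ≤ 1 / 2) (by norm_num : (0 : ℝ) ≤ 1 / 2)
        (by norm_num) using 1
      module
    · convert hLconv hxL hyL (by norm_num : (0 : ℝ) ≤ 1 / 2) (by norm_num : (0 : ℝ) ≤ 1 / 2)
        (by norm_num) using 1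
      module
  have hslice_compact : ∀ w' : EuclideanSpace ℝ (Fin n), (K ∩ (-w' +ᵥ L)).Nonempty →
      IsCompact (K ∩ (w' +ᵥ L)) := by
    rintro w' ⟨y, hy⟩
    refine ((hA.smul (2 : ℝ)).vadd (-y)).of_isClosed_subset (hslice_closed w') fun x hx => ?_
    rw [mem_vadd_set_iff_neg_vadd_mem, mem_smul_set_iff_inv_smul_mem₀ two_ne_zero]
    convert hsum w' x hx y hy using 1
    rw [vadd_eq_add]
    module
  have hXne := hslice_ne w hwsupp
  have hYne := hslice_ne (-w) hwsupp'
  have hX := hslice_compact w hYne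
  have hY := hslice_compact (-w) (by rwa [neg_neg])
  obtain ⟨α, hα⟩ : ∃ α, α = g w ^ (1 / (n : ℝ)) / g 0 ^ (1 / (n : ℝ)) := ⟨_, rfl⟩
  obtain ⟨β, hβ⟩ : ∃ β, β = g (-w) ^ (1 / (n : ℝ)) / g 0 ^ (1 / (n : ℝ)) := ⟨_, rfl⟩
  have hα0 : 0 ≤ α := hα ▸ div_nonneg (Real.rpow_nonneg (hg_nonneg _) _) hmidpos.le
  have hβ0 : 0 ≤ β := hβ ▸ div_nonneg (Real.rpow_nonneg (hg_nonneg _) _) hmidpos.le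
  have hαβ : α + β = 2 := by
    rw [hα, hβ, ← add_div, div_eq_iff hmidpos.ne']
    linarith
  have hvol : ∀ x, IsCompact (K ∩ (x +ᵥ L)) → volume (K ∩ (x +ᵥ L)) =
      ENNReal.ofReal ((g x ^ (1 / (n : ℝ)) / g 0 ^ (1 / (n : ℝ))) ^
        Module.finrank ℝ (EuclideanSpace ℝ (Fin n))) * volume A := by
    intro x hx
    rw [hdim, div_pow, one_div, Real.rpow_inv_natCast_pow (hg_nonneg x) (by omega),
      Real.rpow_inv_natCast_pow hg0.le (by omega), ← ENNReal.ofReal_toReal hμA.2, ← hgA,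
      ← ENNReal.ofReal_mul (div_nonneg (hg_nonneg x) hg0.le), div_mul_cancel₀ _ hg0.ne', hg,
      ENNReal.ofReal_toReal hx.measure_lt_top.ne]
  obtain ⟨v, hv1, hv2⟩ := (PrekopaLeindler.euclideanSpace n).exists_eq_vadd_smul hX hY
    (hslice_conv w) (hslice_conv (-w)) hXne hYne hAconv hA.isClosed hμA.1 (hsum w) hα0 hβ0 hαβ
    (hα ▸ hvol w hX) (hβ ▸ hvol (-w) hY)
  obtain ⟨D, hD⟩ : ∃ D : ℝ → Set (EuclideanSpace ℝ (Fin n)),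
      D = fun t => ((-(t • v)) +ᵥ K) ∩ ((t • (w - v)) +ᵥ L) := ⟨_, rfl⟩
  have hmemD : ∀ t z, z ∈ D t ↔ z + t • v ∈ K ∧ z + t • v - t • w ∈ L := by
    intro t z
    rw [hD]
    simp only [mem_inter_iff, mem_vadd_set_iff_neg_vadd_mem, vadd_eq_add, neg_neg]
    rw [add_comm, show -(t • (w - v)) + z = z + t • v - t • w by module]
  have hconcave : ∀ s s' a b : ℝ, 0 ≤ a → 0 ≤ b → a + b = 1 → ∀ z ∈ D s, ∀ z' ∈ D s',
      a • z + b • z' ∈ D (a * s + b * s') := by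
    intro s s' a b ha hb hab z hz z' hz'
    rw [hmemD] at *
    refine ⟨?_, ?_⟩
    · convert hKconv hz.1 hz'.1 ha hb hab using 1
      module
    · convert hLconv hz.2 hz'.2 ha hb hab using 1
      module
  have hDzero : D 0 = A := by
    ext z
    simp [hmemD, hAdef]
  have hDone : D 1 = α • A := by
    ext z
    have h := Set.ext_iff.1 hv1 (z + v)
    rw [mem_inter_iff, mem_vadd_set_iff_neg_vadd_mem, mem_vadd_set_iff_neg_vadd_mem, vadd_eq_add,
      vadd_eq_add, neg_add_eq_sub, add_comm z, neg_add_cancel_left] at h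
    simpa [hmemD, add_comm] using h
  have hDneg : D (-1) = β • A := by
    ext z
    have h := Set.ext_iff.1 hv2 (z - v)
    rw [mem_inter_iff, mem_vadd_set_iff_neg_vadd_mem, mem_vadd_set_iff_neg_vadd_mem, vadd_eq_add,
      vadd_eq_add, neg_neg, neg_neg, add_sub_cancel] at h
    rw [hmemD, ← h, show z + (-1 : ℝ) • v = z - v by module,
      show z - v - (-1 : ℝ) • w = w + (z - v) by module]
  have hAne : A.Nonempty := nonempty_of_measure_ne_zero hμA.1
  refine ⟨v, α - 1, ⟨by linarith, by linarith⟩, fun t ht => ?_⟩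
  rw [← hAdef, show ((-(t • v)) +ᵥ K) ∩ ((t • (w - v)) +ᵥ L) = D t by rw [hD]]
  rcases le_total 0 t with ht0 | ht0
  · exact (eq_smul_of_concave_family hA hAconv hAne hconcave hDzero
      (by rw [hDone]; ring_nf) (by rw [hDneg]; congr 1; linarith) ⟨ht0, ht.2⟩).symm
  · have h := eq_smul_of_concave_family (D := fun s => D (-s)) (l := -(α - 1)) (t := -t) hA hAconv
      hAne
      (fun s s' a b ha hb hab z hz z' hz' => by
        convert hconcave (-s) (-s') a b ha hb hab z hz z' hz' using 2
        ring)
      (by rw [neg_zero, hDzero]) (by rw [hDneg]; congr 1; linarith)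
      (by rw [neg_neg, hDone]; congr 1; linarith) ⟨by linarith, by linarith [ht.1]⟩
    rw [neg_neg, neg_mul_neg] at h
    exact h.symm
end

section
/- Let n > 1 and let K ⊆ ℝⁿ be a convex body with K = −K, and let g = g_{K,K} be its covariogram. Then for every h with 0 < h < vol(K), the superlevel set {x ∈ ℝⁿ : g(x) ≥ h} is strictly convex: for all distinct x, y with g(x) ≥ h and g(y) ≥ h and every t ∈ (0,1), g((1−t)x + ty) > h. -/
open MeasureTheory Set Pointwise
open scoped ENNReal

/-- The one-dimensional Brunn–Minkowski inequality for compact sets. -/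
lemma IsCompact.volume_add_le_real {a b : ℝ} (ha : 0 < a) (hb : 0 < b) {A B C : Set ℝ}
    (hA : IsCompact A) (hB : IsCompact B) (hAne : A.Nonempty) (hBne : B.Nonempty)
    (hC : ∀ x ∈ A, ∀ y ∈ B, a * x + b * y ∈ C) :
    ENNReal.ofReal a * volume A + ENNReal.ofReal b * volume B ≤ volume C := by
  obtain ⟨p, hpA, hp⟩ := hA.exists_isGreatest hAne
  obtain ⟨q, hqB, hq⟩ := hB.exists_isLeast hBne
  have hA' : volume ((fun z => z + b * q) '' (a • A)) = ENNReal.ofReal a * volume A := by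
    rw [image_add_right, measure_preimage_add_right, Measure.addHaar_smul]
    simp [abs_of_pos ha]
  have hB' : volume ((fun z => z + a * p) '' (b • B)) = ENNReal.ofReal b * volume B := by
    rw [image_add_right, measure_preimage_add_right, Measure.addHaar_smul]
    simp [abs_of_pos hb]
  have hBm : MeasurableSet ((fun z => z + a * p) '' (b • B)) :=
    ((hB.smul b).image (by fun_prop)).measurableSet
  rw [← hA', ← hB', ← measure_union₀ hBm.nullMeasurableSet]
  · apply measure_mono
    rintro _ (⟨_, ⟨x, hx, rfl⟩, rfl⟩ | ⟨_, ⟨y, hy, rfl⟩, rfl⟩)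
    · exact hC x hx q hqB
    · simpa [add_comm] using hC p hpA y hy
  · refine measure_mono_null (t := {a * p + b * q}) ?_ (by simp)
    rintro z ⟨⟨_, ⟨x, hx, rfl⟩, rfl⟩, ⟨_, ⟨y, hy, rfl⟩, hz⟩⟩
    have h1 := mul_le_mul_of_nonneg_left (hp hx) ha.le
    have h2 := mul_le_mul_of_nonneg_left (hq hy) hb.le
    simp only [smul_eq_mul, mem_singleton_iff] at hz ⊢
    linarith

/-- The one-dimensional Brunn–Minkowski inequality for measurable sets. -/
lemma MeasurableSet.volume_add_le_real {a b : ℝ} (ha : 0 < a) (hb : 0 < b) {A B C : Set ℝ}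
    (hA : MeasurableSet A) (hB : MeasurableSet B) (hAne : A.Nonempty) (hBne : B.Nonempty)
    (hC : ∀ x ∈ A, ∀ y ∈ B, a * x + b * y ∈ C) :
    ENNReal.ofReal a * volume A + ENNReal.ofReal b * volume B ≤ volume C := by
  obtain ⟨p, hp⟩ := hAne
  obtain ⟨q, hq⟩ := hBne
  rw [hA.measure_eq_iSup_isCompact, hB.measure_eq_iSup_isCompact]
  simp only [ENNReal.mul_iSup, iSup_and']
  refine ENNReal.biSup_add_biSup_le' ⟨∅, by simp⟩ ⟨∅, by simp⟩ fun A' hA' B' hB' => ?_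
  refine le_trans ?_ (IsCompact.volume_add_le_real ha hb (hA'.2.insert p) (hB'.2.insert q)
    (insert_nonempty _ _) (insert_nonempty _ _) (C := C) ?_)
  · gcongr <;> exact subset_insert _ _
  · exact fun x hx y hy => hC x (insert_subset hp hA'.1 hx) y (insert_subset hq hB'.1 hy)

lemma lintegral_eq_lintegral_meas_lt_of_le_one {f : ℝ → ℝ≥0∞} (hf : Measurable f)
    (hf1 : ∀ x, f x ≤ 1) :
    ∫⁻ x, f x = ∫⁻ r in Ioo (0 : ℝ) 1, volume {x | ENNReal.ofReal r < f x} := by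
  have hfin : ∀ x, f x ≠ ∞ := fun x => ne_top_of_le_ne_top ENNReal.one_ne_top (hf1 x)
  have h := lintegral_eq_lintegral_meas_lt (volume : Measure ℝ) (f := fun x => (f x).toReal)
    (.of_forall fun x => ENNReal.toReal_nonneg) hf.ennreal_toReal.aemeasurable
  simp only [ENNReal.ofReal_toReal (hfin _)] at h
  have hset : ∀ r : ℝ, 0 < r → {x | r < (f x).toReal} = {x | ENNReal.ofReal r < f x} := by
    intro r hr
    ext x
    exact (ENNReal.ofReal_lt_iff_lt_toReal hr.le (hfin x)).symm
  rw [h, setLIntegral_congr_fun measurableSet_Ioi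
    (fun r hr => by rw [hset r hr]), ← Ioo_union_Ici_eq_Ioi (zero_lt_one (α := ℝ)),
    lintegral_union measurableSet_Ici (by
      rw [disjoint_left]; exact fun x hx hx' => absurd hx.2 (not_lt.2 hx'))]
  conv_rhs => rw [← add_zero (∫⁻ r in Ioo (0 : ℝ) 1, _)]
  congr 1
  rw [setLIntegral_congr_fun (g := fun _ => 0) measurableSet_Ici]
  · simp
  · intro r hr
    have : {x | ENNReal.ofReal r < f x} = ∅ := by
      ext x
      simpa using (hf1 x).trans (by simpa using ENNReal.ofReal_le_ofReal hr)
    simp [this]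

lemma lintegral_add_le_of_min_le {a b : ℝ} (ha : 0 < a) (hb : 0 < b)
    {f g h : ℝ → ℝ≥0∞} (hf : Measurable f) (hg : Measurable g) (hh : Measurable h)
    (hf1 : ⨆ x, f x = 1) (hg1 : ⨆ x, g x = 1)
    (hfgh : ∀ x y, min (f x) (g y) ≤ h (a * x + b * y)) :
    ENNReal.ofReal a * (∫⁻ x, f x) + ENNReal.ofReal b * ∫⁻ x, g x ≤ ∫⁻ x, h x := by
  have hf' : ∀ x, f x ≤ 1 := fun x => hf1 ▸ le_iSup f x
  have hg' : ∀ x, g x ≤ 1 := fun x => hg1 ▸ le_iSup g x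
  have hmeas : ∀ u : ℝ → ℝ≥0∞, Measurable fun r : ℝ => volume {x | ENNReal.ofReal r < u x} := by
    intro u
    refine Antitone.measurable fun r s hrs => measure_mono fun x hx => ?_
    exact lt_of_le_of_lt (ENNReal.ofReal_le_ofReal hrs) hx
  calc ENNReal.ofReal a * (∫⁻ x, f x) + ENNReal.ofReal b * ∫⁻ x, g x
      ≤ ∫⁻ x, min (h x) 1 := ?_
    _ ≤ ∫⁻ x, h x := lintegral_mono fun x => min_le_left _ _
  rw [lintegral_eq_lintegral_meas_lt_of_le_one hf hf',
    lintegral_eq_lintegral_meas_lt_of_le_one hg hg',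
    lintegral_eq_lintegral_meas_lt_of_le_one (hh.min measurable_const) (fun x => min_le_right _ _),
    ← lintegral_const_mul _ (hmeas f), ← lintegral_const_mul _ (hmeas g),
    ← lintegral_add_left ((hmeas f).const_mul _)]
  refine setLIntegral_mono (hmeas _) fun r hr => ?_
  have hr1 : ENNReal.ofReal r < 1 := by
    simpa using (ENNReal.ofReal_lt_ofReal_iff one_pos).2 hr.2
  refine MeasurableSet.volume_add_le_real ha hb (measurableSet_lt measurable_const hf)
    (measurableSet_lt measurable_const hg) (lt_iSup_iff (f := f).1 (hf1 ▸ hr1))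
    (lt_iSup_iff (f := g).1 (hg1 ▸ hr1)) fun x hx y hy => ?_
  exact lt_min ((lt_min hx hy).trans_le (hfgh x y)) hr1

lemma ENNReal.rpow_mul_rpow_le_add {a b : ℝ} (ha : 0 < a) (hb : 0 < b) (hab : a + b = 1)
    (x y : ℝ≥0∞) : x ^ a * y ^ b ≤ ENNReal.ofReal a * x + ENNReal.ofReal b * y := by
  by_cases hx : x = ∞
  · simp [hx, ha]
  by_cases hy : y = ∞
  · simp [hy, hb]
  lift x to NNReal using hx
  lift y to NNReal using hy
  rw [← ENNReal.coe_rpow_of_nonneg _ ha.le, ← ENNReal.coe_rpow_of_nonneg _ hb.le,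
    ENNReal.ofReal, ENNReal.ofReal]
  have := NNReal.geom_mean_le_arith_mean2_weighted a.toNNReal b.toNNReal x y
    (by rw [← Real.toNNReal_add ha.le hb.le, hab, Real.toNNReal_one])
  rw [Real.coe_toNNReal _ ha.le, Real.coe_toNNReal _ hb.le] at this
  exact_mod_cast this

lemma ENNReal.min_le_rpow_mul_rpow {a b : ℝ} (ha : 0 < a) (hb : 0 < b) (hab : a + b = 1)
    (x y : ℝ≥0∞) : min x y ≤ x ^ a * y ^ b := by
  calc min x y = min x y ^ a * min x y ^ b := by
        rw [← ENNReal.rpow_add_of_nonneg _ _ ha.le hb.le, hab, ENNReal.rpow_one]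
    _ ≤ _ := by gcongr; exacts [min_le_left _ _, min_le_right _ _]

lemma prekopaLeindler_real_of_bounded {a b : ℝ} (ha : 0 < a) (hb : 0 < b) (hab : a + b = 1)
    {f g h : ℝ → ℝ≥0∞} (hf : Measurable f) (hg : Measurable g) (hh : Measurable h)
    (hf1 : ⨆ x, f x ≠ ∞) (hg1 : ⨆ x, g x ≠ ∞)
    (hfgh : ∀ x y, f x ^ a * g y ^ b ≤ h (a * x + b * y)) :
    (∫⁻ x, f x) ^ a * (∫⁻ x, g x) ^ b ≤ ∫⁻ x, h x := by
  set S := ⨆ x, f x with hS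
  set T := ⨆ x, g x with hT
  by_cases hS0 : S = 0
  · have : ∀ x, f x = 0 := by simpa [hS] using hS0
    simp [this, ha]
  by_cases hT0 : T = 0
  · have : ∀ x, g x = 0 := by simpa [hT] using hT0
    simp [this, hb]
  have key := lintegral_add_le_of_min_le ha hb (f := fun x => S⁻¹ * f x)
    (g := fun x => T⁻¹ * g x) (h := fun x => (S⁻¹ ^ a * T⁻¹ ^ b) * h x)
    (hf.const_mul _) (hg.const_mul _) (hh.const_mul _)
    (by rw [← ENNReal.mul_iSup, ← hS, ENNReal.inv_mul_cancel hS0 hf1])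
    (by rw [← ENNReal.mul_iSup, ← hT, ENNReal.inv_mul_cancel hT0 hg1])
    (fun x y => by
      refine (ENNReal.min_le_rpow_mul_rpow ha hb hab _ _).trans ?_
      rw [ENNReal.mul_rpow_of_nonneg _ _ ha.le, ENNReal.mul_rpow_of_nonneg _ _ hb.le,
        mul_mul_mul_comm]
      gcongr
      exact hfgh x y)
  replace key := (ENNReal.rpow_mul_rpow_le_add ha hb hab _ _).trans key
  rw [lintegral_const_mul _ hf, lintegral_const_mul _ hg, lintegral_const_mul _ hh,
    ENNReal.mul_rpow_of_nonneg _ _ ha.le, ENNReal.mul_rpow_of_nonneg _ _ hb.le,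
    mul_mul_mul_comm] at key
  have hSi : S⁻¹ ^ a ≠ 0 ∧ S⁻¹ ^ a ≠ ∞ := by
    simp [ENNReal.rpow_eq_top_iff, ENNReal.rpow_eq_zero_iff, hS0, hf1, ha]
  have hTi : T⁻¹ ^ b ≠ 0 ∧ T⁻¹ ^ b ≠ ∞ := by
    simp [ENNReal.rpow_eq_top_iff, ENNReal.rpow_eq_zero_iff, hT0, hg1, hb]
  exact (ENNReal.mul_le_mul_iff_right (mul_ne_zero hSi.1 hTi.1)
    (ENNReal.mul_ne_top hSi.2 hTi.2)).1 key

/-- The one-dimensional Prékopa–Leindler inequality. -/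
lemma prekopaLeindler_real {a b : ℝ} (ha : 0 < a) (hb : 0 < b) (hab : a + b = 1)
    {f g h : ℝ → ℝ≥0∞} (hf : Measurable f) (hg : Measurable g) (hh : Measurable h)
    (hfgh : ∀ x y, f x ^ a * g y ^ b ≤ h (a * x + b * y)) :
    (∫⁻ x, f x) ^ a * (∫⁻ x, g x) ^ b ≤ ∫⁻ x, h x := by
  by_cases hf0 : ∫⁻ x, f x = 0
  · simp [hf0, ha]
  by_cases hg0 : ∫⁻ x, g x = 0
  · simp [hg0, hb]
  have htrunc : ∀ u : ℝ → ℝ≥0∞, Measurable u →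
      Filter.Tendsto (fun k : ℕ => ∫⁻ x, min (u x) k) Filter.atTop (nhds (∫⁻ x, u x)) := by
    intro u hu
    refine lintegral_tendsto_of_tendsto_of_monotone
      (fun k => (hu.min measurable_const).aemeasurable) (.of_forall fun x k l hkl => ?_)
      (.of_forall fun x => ?_)
    · exact min_le_min_left _ (by exact_mod_cast hkl)
    · simpa using (tendsto_const_nhds (x := u x)).min ENNReal.tendsto_nat_nhds_top
  refine le_of_tendsto (ENNReal.Tendsto.mul
    ((htrunc f hf).ennrpow_const a) (Or.inl ?_) ((htrunc g hg).ennrpow_const b) (Or.inl ?_))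
    (.of_forall fun k => ?_)
  · simp [ENNReal.rpow_eq_zero_iff, hf0, ha.le]
  · simp [ENNReal.rpow_eq_zero_iff, hg0, hb.le]
  · have hk : ∀ u : ℝ → ℝ≥0∞, ⨆ x, min (u x) (k : ℝ≥0∞) ≠ ∞ := fun u =>
      ne_top_of_le_ne_top (ENNReal.natCast_ne_top k) (iSup_le fun x => min_le_right _ _)
    refine prekopaLeindler_real_of_bounded ha hb hab (hf.min measurable_const)
      (hg.min measurable_const) hh (hk f) (hk g) fun x y => (hfgh x y).trans' ?_
    gcongr <;> exact min_le_left _ _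

/-- The Prékopa–Leindler inequality on `Fin n → ℝ`. -/
lemma prekopaLeindler_pi {a b : ℝ} (ha : 0 < a) (hb : 0 < b) (hab : a + b = 1) (n : ℕ)
    {f g h : (Fin n → ℝ) → ℝ≥0∞} (hf : Measurable f) (hg : Measurable g) (hh : Measurable h)
    (hfgh : ∀ x y, f x ^ a * g y ^ b ≤ h (a • x + b • y)) :
    (∫⁻ x, f x) ^ a * (∫⁻ x, g x) ^ b ≤ ∫⁻ x, h x := by
  induction n with
  | zero =>
    simp only [lintegral_unique, volume_pi, Measure.pi_empty_univ, mul_one]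
    exact (hfgh _ _).trans_eq (congrArg h (Subsingleton.elim _ _))
  | succ n ih =>
    let e := (MeasurableEquiv.piFinSuccAbove (fun _ : Fin (n + 1) => ℝ) 0).symm
    have he : MeasurePreserving e :=
      (volume_preserving_piFinSuccAbove (fun _ : Fin (n + 1) => ℝ) 0).symm
    have hfub : ∀ u : (Fin (n + 1) → ℝ) → ℝ≥0∞, Measurable u →
        ∫⁻ x, u x = ∫⁻ s, ∫⁻ p, u (e (s, p)) := by
      intro u hu
      rw [← he.lintegral_comp hu, Measure.volume_eq_prod,
        lintegral_prod (fun z => u (e z)) (hu.comp e.measurable).aemeasurable]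
    have hmeas : ∀ u : (Fin (n + 1) → ℝ) → ℝ≥0∞, Measurable u →
        Measurable fun s => ∫⁻ p, u (e (s, p)) := fun u hu =>
      (hu.comp e.measurable).lintegral_prod_right'
    rw [hfub f hf, hfub g hg, hfub h hh]
    refine prekopaLeindler_real ha hb hab (hmeas f hf) (hmeas g hg) (hmeas h hh) fun s r => ?_
    have hsec : ∀ s : ℝ, Measurable fun p => e (s, p) := fun s =>
      e.measurable.comp measurable_prodMk_left
    refine ih (hf.comp (hsec s)) (hg.comp (hsec r)) (hh.comp (hsec _)) fun p q => ?_
    refine (hfgh _ _).trans_eq (congrArg h ?_)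
    ext i
    refine Fin.cases ?_ (fun j => ?_) i <;> simp [e]

/-- The Prékopa–Leindler inequality on Euclidean space. -/
lemma prekopaLeindler {a b : ℝ} (ha : 0 < a) (hb : 0 < b) (hab : a + b = 1) {n : ℕ}
    {f g h : EuclideanSpace ℝ (Fin n) → ℝ≥0∞} (hf : Measurable f) (hg : Measurable g)
    (hh : Measurable h) (hfgh : ∀ x y, f x ^ a * g y ^ b ≤ h (a • x + b • y)) :
    (∫⁻ x, f x) ^ a * (∫⁻ x, g x) ^ b ≤ ∫⁻ x, h x := by
  have he := PiLp.volume_preserving_toLp (Fin n)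
  rw [← he.lintegral_comp hf, ← he.lintegral_comp hg, ← he.lintegral_comp hh]
  exact prekopaLeindler_pi ha hb hab n (hf.comp he.measurable) (hg.comp he.measurable)
    (hh.comp he.measurable) fun x y => hfgh _ _

/-- The Prékopa–Leindler inequality for exponential weights on compact sets. -/
lemma prekopaLeindler_exp {a b : ℝ} (ha : 0 < a) (hb : 0 < b) (hab : a + b = 1) {n : ℕ}
    {A B M : Set (EuclideanSpace ℝ (Fin n))} (hA : IsCompact A) (hB : IsCompact B)
    (hM : IsCompact M) {φ ψ χ : EuclideanSpace ℝ (Fin n) → ℝ}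
    (hφ : Continuous φ) (hψ : Continuous ψ) (hχ : Continuous χ)
    (hABM : ∀ p ∈ A, ∀ q ∈ B, a • p + b • q ∈ M)
    (hle : ∀ p ∈ A, ∀ q ∈ B, a * φ p + b * ψ q ≤ χ (a • p + b • q)) :
    (∫ p in A, Real.exp (φ p)) ^ a * (∫ p in B, Real.exp (ψ p)) ^ b
      ≤ ∫ p in M, Real.exp (χ p) := by
  have hmeas : ∀ {S : Set (EuclideanSpace ℝ (Fin n))} {u : EuclideanSpace ℝ (Fin n) → ℝ},
      IsCompact S → Continuous u →
      Measurable (S.indicator fun p => ENNReal.ofReal (Real.exp (u p))) := fun hS hu =>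
    (by fun_prop : Measurable fun p => ENNReal.ofReal (Real.exp _)).indicator hS.measurableSet
  have hint : ∀ {S : Set (EuclideanSpace ℝ (Fin n))} {u : EuclideanSpace ℝ (Fin n) → ℝ},
      IsCompact S → Continuous u →
      ∫⁻ p, S.indicator (fun p => ENNReal.ofReal (Real.exp (u p))) p
        = ENNReal.ofReal (∫ p in S, Real.exp (u p)) := by
    intro S u hS hu
    rw [lintegral_indicator hS.measurableSet, ofReal_integral_eq_lintegral_ofReal]
    · exact (Real.continuous_exp.comp hu).continuousOn.integrableOn_compact hS
    · exact .of_forall fun p => (Real.exp_pos _).le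
  have hpos : ∀ (S : Set (EuclideanSpace ℝ (Fin n))) (u : EuclideanSpace ℝ (Fin n) → ℝ),
      0 ≤ ∫ p in S, Real.exp (u p) := fun S u => integral_nonneg fun p => (Real.exp_pos _).le
  have key := prekopaLeindler ha hb hab (hmeas hA hφ) (hmeas hB hψ) (hmeas hM hχ) ?_
  · rw [hint hA hφ, hint hB hψ, hint hM hχ, ENNReal.ofReal_rpow_of_nonneg (hpos _ _) ha.le,
      ENNReal.ofReal_rpow_of_nonneg (hpos _ _) hb.le,
      ← ENNReal.ofReal_mul (Real.rpow_nonneg (hpos _ _) _)] at key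
    exact (ENNReal.ofReal_le_ofReal_iff (hpos _ _)).1 key
  · intro p q
    by_cases hp : p ∈ A
    · by_cases hq : q ∈ B
      · rw [indicator_of_mem hp, indicator_of_mem hq, indicator_of_mem (hABM p hp q hq),
          ENNReal.ofReal_rpow_of_pos (Real.exp_pos _), ENNReal.ofReal_rpow_of_pos (Real.exp_pos _),
          ← ENNReal.ofReal_mul (by positivity), ← Real.exp_mul, ← Real.exp_mul, ← Real.exp_add]
        gcongr
        linarith [hle p hp q hq]
      · simp [hq, hb]
    · simp [hp, ha]

lemma rpow_mul_rpow_volume_le {a b : ℝ} (ha : 0 < a) (hb : 0 < b) (hab : a + b = 1) {n : ℕ}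
    {A B M : Set (EuclideanSpace ℝ (Fin n))} (hA : IsCompact A) (hB : IsCompact B)
    (hM : IsCompact M) (hABM : ∀ p ∈ A, ∀ q ∈ B, a • p + b • q ∈ M) :
    volume.real A ^ a * volume.real B ^ b ≤ volume.real M := by
  simpa using prekopaLeindler_exp ha hb hab hA hB hM continuous_zero continuous_zero
    continuous_zero hABM (by simp)

lemma abs_exp_sub_quadratic_le {R u w δ : ℝ} (hu : |u| ≤ R) (hw : |w| ≤ R) (hδ0 : 0 < δ)
    (hδ1 : δ ≤ 1) (hδR : δ * (2 * R) ≤ 1) :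
    |Real.exp (δ * u - δ ^ 2 / 2 * w) - (1 + δ * u + δ ^ 2 / 2 * (u ^ 2 - w))|
      ≤ (8 * R ^ 3 + 2 * R ^ 2) * δ ^ 3 := by
  have hR : 0 ≤ R := (abs_nonneg u).trans hu
  have hv : |u - δ / 2 * w| ≤ 2 * R := by
    calc |u - δ / 2 * w| ≤ |u| + |δ / 2 * w| := abs_sub _ _
      _ = |u| + δ / 2 * |w| := by rw [abs_mul, abs_of_pos (by positivity : 0 < δ / 2)]
      _ ≤ R + 1 * R := by gcongr; linarith
      _ = 2 * R := by ring
  set X := δ * u - δ ^ 2 / 2 * w with hX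
  have hXe : X = δ * (u - δ / 2 * w) := by rw [hX]; ring
  have hXb : |X| ≤ δ * (2 * R) := by
    rw [hXe, abs_mul, abs_of_pos hδ0]; gcongr
  have h1 := Real.exp_bound (hXb.trans hδR) (n := 3) (by norm_num)
  norm_num [Finset.sum_range_succ, Nat.factorial] at h1
  have h2 : |X| ^ 3 * (2 / 9) ≤ (8 * R ^ 3) * δ ^ 3 := by
    calc |X| ^ 3 * (2 / 9) ≤ (δ * (2 * R)) ^ 3 * 1 := by gcongr; norm_num
      _ = _ := by ring
  have h3 : |(1 + X + X ^ 2 / 2) - (1 + δ * u + δ ^ 2 / 2 * (u ^ 2 - w))| ≤ 2 * R ^ 2 * δ ^ 3 := by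
    have : (1 + X + X ^ 2 / 2) - (1 + δ * u + δ ^ 2 / 2 * (u ^ 2 - w))
        = δ ^ 3 * ((-u / 2 + δ / 8 * w) * w) := by rw [hX]; ring
    rw [this, abs_mul, abs_of_pos (by positivity : 0 < δ ^ 3), abs_mul, mul_comm]
    have h4 : |-u / 2 + δ / 8 * w| ≤ 2 * R := by
      calc |-u / 2 + δ / 8 * w| ≤ |-u / 2| + |δ / 8 * w| := abs_add_le _ _
        _ = |u| / 2 + δ / 8 * |w| := by
          rw [abs_mul, abs_of_pos (by positivity : 0 < δ / 8), abs_div, abs_neg]; norm_num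
        _ ≤ R / 2 + 1 * R := by gcongr; linarith
        _ ≤ 2 * R := by linarith
    calc _ ≤ (2 * R * R) * δ ^ 3 := by gcongr
      _ = _ := by ring
  calc _ ≤ _ := abs_sub_le _ (1 + X + X ^ 2 / 2) _
    _ ≤ (8 * R ^ 3) * δ ^ 3 + 2 * R ^ 2 * δ ^ 3 := add_le_add (h1.trans h2) h3
    _ = _ := by ring

lemma setIntegral_eq_zero_of_symmetric {n : ℕ} {S : Set (EuclideanSpace ℝ (Fin n))}
    (hS : ∀ p ∈ S, -p ∈ S) (ℓ : EuclideanSpace ℝ (Fin n) →L[ℝ] ℝ) : ∫ p in S, ℓ p = 0 := by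
  have hpre : (fun p => -p) ⁻¹' S = S :=
    Subset.antisymm (fun p hp => by simpa using hS _ hp) hS
  have h := (Measure.measurePreserving_neg (volume : Measure (EuclideanSpace ℝ (Fin n)))
    ).setIntegral_preimage_emb (MeasurableEquiv.neg _).measurableEmbedding ℓ S
  rw [hpre] at h
  simp only [map_neg, integral_neg] at h
  linarith

/-- Second-order expansion of a Laplace-type integral over a symmetric compact set. -/
lemma exists_abs_integral_exp_sub_le {n : ℕ} {S : Set (EuclideanSpace ℝ (Fin n))}
    (hS : IsCompact S) (hsymm : ∀ p ∈ S, -p ∈ S) (ℓ : EuclideanSpace ℝ (Fin n) →L[ℝ] ℝ)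
    {w : EuclideanSpace ℝ (Fin n) → ℝ} (hw : Continuous w) :
    ∃ C : ℝ, ∀ᶠ δ : ℝ in nhdsWithin 0 (Ioi 0),
      |(∫ p in S, Real.exp (δ * ℓ p - δ ^ 2 / 2 * w p))
        - (volume.real S + δ ^ 2 / 2 * ∫ p in S, (ℓ p ^ 2 - w p))| ≤ C * δ ^ 3 := by
  obtain ⟨R₁, hR₁⟩ := hS.exists_bound_of_continuousOn ℓ.continuous.continuousOn
  obtain ⟨R₂, hR₂⟩ := hS.exists_bound_of_continuousOn hw.continuousOn
  set R := max (max R₁ R₂) 1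
  have hRpos : 0 < R := lt_of_lt_of_le one_pos (le_max_right _ _)
  refine ⟨(8 * R ^ 3 + 2 * R ^ 2) * volume.real S, ?_⟩
  have hδ : (0 : ℝ) < min 1 (1 / (2 * R)) := by positivity
  filter_upwards [Ioo_mem_nhdsGT hδ] with δ hδ'
  have hδ1 : δ ≤ 1 := hδ'.2.le.trans (min_le_left _ _)
  have hδR : δ * (2 * R) ≤ 1 :=
    (le_div_iff₀ (by positivity)).1 (hδ'.2.le.trans (min_le_right _ _))
  have hcont : ∀ u : EuclideanSpace ℝ (Fin n) → ℝ, Continuous u → IntegrableOn u S := fun u hu =>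
    hu.continuousOn.integrableOn_compact hS
  have hquad : ∫ p in S, (1 + δ * ℓ p + δ ^ 2 / 2 * (ℓ p ^ 2 - w p))
      = volume.real S + δ ^ 2 / 2 * ∫ p in S, (ℓ p ^ 2 - w p) := by
    rw [integral_add (hcont _ (by fun_prop)) (hcont _ (by fun_prop)),
      integral_add (hcont _ (by fun_prop)) (hcont _ (by fun_prop)),
      integral_const_mul, integral_const_mul, setIntegral_eq_zero_of_symmetric hsymm]
    simp
  rw [← hquad, ← integral_sub (hcont _ (by fun_prop)) (hcont _ (by fun_prop))]
  have hbound := norm_setIntegral_le_of_norm_le_const (μ := volume) (s := S) hS.measure_lt_top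
    (f := fun p => Real.exp (δ * ℓ p - δ ^ 2 / 2 * w p)
      - (1 + δ * ℓ p + δ ^ 2 / 2 * (ℓ p ^ 2 - w p)))
    (C := (8 * R ^ 3 + 2 * R ^ 2) * δ ^ 3) (fun p hp =>
      abs_exp_sub_quadratic_le ((hR₁ p hp).trans ((le_max_left _ _).trans (le_max_left _ _)))
        ((hR₂ p hp).trans ((le_max_right _ _).trans (le_max_left _ _))) hδ'.1 hδ1 hδR)
  rw [Real.norm_eq_abs] at hbound
  linarith

lemma nonpos_of_eventually_sq_mul_le {J C : ℝ}
    (h : ∀ᶠ δ : ℝ in nhdsWithin 0 (Ioi 0), δ ^ 2 * J ≤ C * δ ^ 3) : J ≤ 0 := by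
  have hlim : Filter.Tendsto (fun δ : ℝ => C * δ) (nhdsWithin 0 (Ioi 0)) (nhds 0) := by
    have : Continuous fun δ : ℝ => C * δ := by fun_prop
    simpa using (this.tendsto 0).mono_left nhdsWithin_le_nhds
  refine ge_of_tendsto hlim ?_
  filter_upwards [h, self_mem_nhdsWithin] with δ hδ hpos
  have : (0 : ℝ) < δ ^ 2 := pow_pos hpos 2
  refine le_of_mul_le_mul_left ?_ this
  linarith [show C * δ ^ 3 = δ ^ 2 * (C * δ) by ring]

/-- In the equality case of the Brunn–Minkowski inequality for symmetric sets, integrals of functions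
that are Lipschitz along a linear functional do not increase from one set to the other. -/
lemma setIntegral_le_of_volume_eq {a b : ℝ} (ha : 0 < a) (hb : 0 < b) (hab : a + b = 1) {n : ℕ}
    {A B M : Set (EuclideanSpace ℝ (Fin n))} (hA : IsCompact A) (hB : IsCompact B)
    (hM : IsCompact M) (hAs : ∀ p ∈ A, -p ∈ A) (hBs : ∀ p ∈ B, -p ∈ B) (hMs : ∀ p ∈ M, -p ∈ M)
    (hABM : ∀ p ∈ A, ∀ q ∈ B, a • p + b • q ∈ M) {V : ℝ} (hV : 0 < V)
    (hAV : volume.real A = V) (hBV : volume.real B = V) (hMV : volume.real M = V)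
    (ℓ : EuclideanSpace ℝ (Fin n) →L[ℝ] ℝ) {f : EuclideanSpace ℝ (Fin n) → ℝ}
    (hf : Continuous f) (hfℓ : ∀ p q, |f p - f q| ≤ |ℓ p - ℓ q|) :
    ∫ p in B, f p ≤ ∫ p in A, f p := by
  by_contra! hlt
  set mA := (∫ p in A, f p) / V with hmA
  set mB := (∫ p in B, f p) / V with hmB
  set Δ := mB - mA with hΔ
  have hΔpos : 0 < Δ := sub_pos.2 ((div_lt_div_iff_of_pos_right hV).2 hlt)
  set c := a * b * Δ ^ 2 with hc
  have hcpos : 0 < c := by positivity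
  let wA : EuclideanSpace ℝ (Fin n) → ℝ := fun p => ℓ p ^ 2 + (b * (2 * Δ) * (f p - mA) - c)
  let wB : EuclideanSpace ℝ (Fin n) → ℝ := fun p => ℓ p ^ 2 + (-(a * (2 * Δ)) * (f p - mB) - c)
  let wM : EuclideanSpace ℝ (Fin n) → ℝ := fun p => ℓ p ^ 2
  have hwA : Continuous wA := by fun_prop
  have hwB : Continuous wB := by fun_prop
  have hwM : Continuous wM := by fun_prop
  have hconv : ∀ p q, wM (a • p + b • q) ≤ a * wA p + b * wB q := by
    intro p q
    simp only [wA, wB, wM, map_add, map_smul, smul_eq_mul]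
    have h1 := hfℓ p q
    have h2 : -|ℓ p - ℓ q| ≤ f p - f q := (abs_le.1 h1).1
    have h3 : 0 ≤ (|ℓ p - ℓ q| - Δ) ^ 2 := sq_nonneg _
    have h4 : |ℓ p - ℓ q| ^ 2 = (ℓ p - ℓ q) ^ 2 := sq_abs _
    have h5 : 0 ≤ (ℓ p - ℓ q) ^ 2 + 2 * Δ * (f p - f q) + Δ ^ 2 := by nlinarith
    have h6 : 0 ≤ a * b * ((ℓ p - ℓ q) ^ 2 + 2 * Δ * (f p - f q) + Δ ^ 2) := by positivity
    have hb' : b = 1 - a := by linarith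
    rw [hc]
    have h7 : mB = mA + Δ := by rw [hΔ]; ring
    rw [h7]
    subst hb'
    nlinarith [h6]
  have hmean : ∀ {S : Set (EuclideanSpace ℝ (Fin n))} (k : ℝ), IsCompact S →
      volume.real S = V →
      ∫ p in S, (ℓ p ^ 2 - (ℓ p ^ 2 + (k * (f p - (∫ p in S, f p) / V) - c))) = V * c := by
    intro S k hS hSV
    have hi : IntegrableOn f S := hf.continuousOn.integrableOn_compact hS
    have hk : ∀ r : ℝ, IntegrableOn (fun _ : EuclideanSpace ℝ (Fin n) => r) S := fun r =>
      continuousOn_const.integrableOn_compact hS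
    have : ∀ p, ℓ p ^ 2 - (ℓ p ^ 2 + (k * (f p - (∫ p in S, f p) / V) - c))
        = (c + k * ((∫ p in S, f p) / V)) - k * f p := fun p => by ring
    simp only [this]
    rw [integral_sub (hk _) (hi.const_mul k), integral_const_mul]
    simp only [integral_const, measureReal_restrict_apply_univ, hSV, smul_eq_mul]
    field_simp
    ring
  obtain ⟨CA, hCA⟩ := exists_abs_integral_exp_sub_le hA hAs ℓ hwA
  obtain ⟨CB, hCB⟩ := exists_abs_integral_exp_sub_le hB hBs ℓ hwB
  obtain ⟨CM, hCM⟩ := exists_abs_integral_exp_sub_le hM hMs ℓ hwM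
  rw [hmean _ hA hAV, hAV] at hCA
  rw [hmean _ hB hBV, hBV] at hCB
  simp only [wM, sub_self, integral_zero, mul_zero, add_zero, hMV] at hCM
  set D := max CA CB with hD
  have hsmall : ∀ᶠ δ : ℝ in nhdsWithin 0 (Ioi 0), 0 < V + δ ^ 2 / 2 * (V * c) - D * δ ^ 3 := by
    have hcont : Continuous fun δ : ℝ => V + δ ^ 2 / 2 * (V * c) - D * δ ^ 3 := by fun_prop
    have := hcont.tendsto 0
    exact (this.mono_left nhdsWithin_le_nhds).eventually (lt_mem_nhds (by simpa using hV))
  have hJ : V * c / 2 ≤ 0 := by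
    refine nonpos_of_eventually_sq_mul_le (C := D + CM) ?_
    filter_upwards [hCA, hCB, hCM, hsmall, self_mem_nhdsWithin] with δ h1 h2 h3 h4 (h5 : 0 < δ)
    have hPL := prekopaLeindler_exp ha hb hab hA hB hM
      (φ := fun p => δ * ℓ p - δ ^ 2 / 2 * wA p) (ψ := fun p => δ * ℓ p - δ ^ 2 / 2 * wB p)
      (χ := fun p => δ * ℓ p - δ ^ 2 / 2 * wM p) (by fun_prop) (by fun_prop) (by fun_prop)
      hABM (fun p _ q _ => by
        have := mul_le_mul_of_nonneg_left (hconv p q) (by positivity : 0 ≤ δ ^ 2 / 2)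
        have hlin : ℓ (a • p + b • q) = a * ℓ p + b * ℓ q := by simp
        rw [hlin]
        linarith)
    set X := V + δ ^ 2 / 2 * (V * c) - D * δ ^ 3 with hX
    have hδ3 : 0 < δ ^ 3 := pow_pos h5 3
    have hXA : X ≤ ∫ p in A, Real.exp (δ * ℓ p - δ ^ 2 / 2 * wA p) := by
      have := mul_le_mul_of_nonneg_right (le_max_left CA CB) hδ3.le
      linarith [(abs_le.1 h1).1]
    have hXB : X ≤ ∫ p in B, Real.exp (δ * ℓ p - δ ^ 2 / 2 * wB p) := by
      have := mul_le_mul_of_nonneg_right (le_max_right CA CB) hδ3.le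
      linarith [(abs_le.1 h2).1]
    have hXM : X ≤ ∫ p in M, Real.exp (δ * ℓ p - δ ^ 2 / 2 * wM p) := by
      calc X = X ^ a * X ^ b := by rw [← Real.rpow_add h4, hab, Real.rpow_one]
        _ ≤ _ := by gcongr
        _ ≤ _ := hPL
    linarith [(abs_le.1 h3).2]
  have : 0 < V * c := by positivity
  linarith

lemma Convex.interior_nonempty_of_volume_pos {n : ℕ} {S : Set (EuclideanSpace ℝ (Fin n))}
    (hS : Convex ℝ S) (hpos : 0 < volume.real S) : (interior S).Nonempty := by
  by_contra hne
  rw [not_nonempty_iff_eq_empty] at hne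
  have h : volume S = 0 := measure_mono_null
    (by rw [frontier, hne, sdiff_empty]; exact subset_closure) (hS.addHaar_frontier volume)
  simp [measureReal_def, h] at hpos

lemma Convex.subset_of_volume_diff_eq_zero {n : ℕ} {S T : Set (EuclideanSpace ℝ (Fin n))}
    (hS : Convex ℝ S) (hpos : 0 < volume.real S) (hT : IsClosed T)
    (h : volume (S \ T) = 0) : S ⊆ T := by
  have hopen : IsOpen (interior S \ T) := isOpen_interior.sdiff hT
  have hempty : interior S \ T = ∅ := (hopen.measure_eq_zero_iff volume).1
    (measure_mono_null (sdiff_subset_sdiff_left interior_subset) h)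
  calc S ⊆ closure S := subset_closure
    _ = closure (interior S) := (hS.closure_interior_eq_closure_of_nonempty_interior
        (hS.interior_nonempty_of_volume_pos hpos)).symm
    _ ⊆ T := closure_minimal (sdiff_eq_empty.1 hempty) hT

/-- The equality case of the Brunn–Minkowski inequality for symmetric convex bodies. -/
lemma subset_of_volume_eq {a b : ℝ} (ha : 0 < a) (hb : 0 < b) (hab : a + b = 1) {n : ℕ}
    {A B M : Set (EuclideanSpace ℝ (Fin n))} (hA : IsCompact A) (hB : IsCompact B)
    (hM : IsCompact M) (hAc : Convex ℝ A) (hBc : Convex ℝ B)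
    (hAs : ∀ p ∈ A, -p ∈ A) (hBs : ∀ p ∈ B, -p ∈ B) (hMs : ∀ p ∈ M, -p ∈ M)
    (hABM : ∀ p ∈ A, ∀ q ∈ B, a • p + b • q ∈ M) {V : ℝ} (hV : 0 < V)
    (hAV : volume.real A = V) (hBV : volume.real B = V) (hMV : volume.real M = V) :
    A ⊆ B := by
  intro p hp
  by_contra hpB
  obtain ⟨ℓ, r, hℓB, hℓp⟩ := geometric_hahn_banach_closed_point hBc hB.isClosed hpB
  have hle := setIntegral_le_of_volume_eq hb ha (by linarith) hB hA hM hBs hAs hMs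
    (fun q hq p hp => by rw [add_comm]; exact hABM p hp q hq) hV hBV hAV hMV ℓ
    (f := fun q => max (ℓ q - r) 0) (by fun_prop)
    (fun q q' => by simpa using abs_max_sub_max_le_abs (ℓ q - r) (ℓ q' - r) 0)
  have hzero : ∫ q in B, max (ℓ q - r) 0 = 0 :=
    setIntegral_eq_zero_of_forall_eq_zero fun q hq => max_eq_right (by linarith [hℓB q hq])
  have hfi : IntegrableOn (fun q => max (ℓ q - r) 0) A :=
    (by fun_prop : Continuous fun q => max (ℓ q - r) 0).continuousOn.integrableOn_compact hA
  have hae := (setIntegral_eq_zero_iff_of_nonneg_ae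
    (.of_forall fun q => le_max_right _ _) hfi).1
    (le_antisymm (hle.trans_eq hzero) (integral_nonneg fun q => le_max_right _ _))
  have hnull : volume (A \ {q | ℓ q ≤ r}) = 0 := by
    rw [Filter.EventuallyEq, ae_restrict_iff' hA.measurableSet, ae_iff] at hae
    refine measure_mono_null (fun q hq => ?_) hae
    have hq2 : r < ℓ q := not_le.1 hq.2
    simp only [mem_ofPred_eq, Pi.zero_apply, not_forall]
    exact ⟨hq.1, (lt_max_of_lt_left (sub_pos.2 hq2)).ne'⟩
  have := hAc.subset_of_volume_diff_eq_zero (hAV ▸ hV)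
    (isClosed_le ℓ.continuous continuous_const) hnull hp
  exact absurd hℓp (not_lt.2 this)

/-- The recentred intersection `(K - x / 2) ∩ (K + x / 2)`. -/
def centeredInter {n : ℕ} (K : Set (EuclideanSpace ℝ (Fin n))) (x : EuclideanSpace ℝ (Fin n)) :
    Set (EuclideanSpace ℝ (Fin n)) :=
  {p | p + (1 / 2 : ℝ) • x ∈ K ∧ p - (1 / 2 : ℝ) • x ∈ K}

section centeredInter

variable {n : ℕ} {K : Set (EuclideanSpace ℝ (Fin n))}

lemma volume_inter_vadd (x : EuclideanSpace ℝ (Fin n)) :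
    volume (K ∩ (x +ᵥ K)) = volume (centeredInter K x) := by
  rw [← measure_preimage_add_right volume ((1 / 2 : ℝ) • x) (K ∩ (x +ᵥ K))]
  congr 1
  ext p
  simp only [mem_preimage, mem_inter_iff, mem_vadd_set_iff_neg_vadd_mem, vadd_eq_add,
    centeredInter, mem_ofPred_eq]
  rw [show -x + (p + (1 / 2 : ℝ) • x) = p - (1 / 2 : ℝ) • x by module]

lemma isCompact_centeredInter (hK : IsCompact K) (x : EuclideanSpace ℝ (Fin n)) :
    IsCompact (centeredInter K x) :=
  ((Homeomorph.addRight ((1 / 2 : ℝ) • x)).isCompact_preimage.2 hK).inter_right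
    (hK.isClosed.preimage (by fun_prop))

lemma smul_add_smul_mem_centeredInter (hK : Convex ℝ K) {a b : ℝ} (ha : 0 ≤ a) (hb : 0 ≤ b)
    (hab : a + b = 1) {x y p q : EuclideanSpace ℝ (Fin n)} (hp : p ∈ centeredInter K x)
    (hq : q ∈ centeredInter K y) : a • p + b • q ∈ centeredInter K (a • x + b • y) := by
  constructor
  · convert hK hp.1 hq.1 ha hb hab using 1
    module
  · convert hK hp.2 hq.2 ha hb hab using 1
    module

lemma convex_centeredInter (hK : Convex ℝ K) (x : EuclideanSpace ℝ (Fin n)) :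
    Convex ℝ (centeredInter K x) := by
  intro p hp q hq a b ha hb hab
  simpa [← add_smul, hab] using smul_add_smul_mem_centeredInter hK ha hb hab hp hq

lemma neg_mem_centeredInter (hK : K = -K) {x p : EuclideanSpace ℝ (Fin n)}
    (hp : p ∈ centeredInter K x) : -p ∈ centeredInter K x := by
  constructor
  · rw [hK, Set.mem_neg]
    convert hp.2 using 1
    module
  · rw [hK, Set.mem_neg]
    convert hp.1 using 1
    module

lemma add_smul_mem_centeredInter (hK : Convex ℝ K) {a b ε : ℝ} (hab : a + b = 1)
    (hε : |ε| ≤ a) (hε' : |ε| ≤ b) {x y p : EuclideanSpace ℝ (Fin n)}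
    (hx : p ∈ centeredInter K x) (hy : p ∈ centeredInter K y) :
    p + (ε / 2) • (y - x) ∈ centeredInter K (a • x + b • y) := by
  have hb : b = 1 - a := by linarith
  subst hb
  rw [abs_le] at hε hε'
  constructor
  · convert hK hx.1 hy.1 (a := a - ε) (b := 1 - a + ε) (by linarith) (by linarith) (by ring)
      using 1
    module
  · convert hK hx.2 hy.2 (a := a + ε) (b := 1 - a - ε) (by linarith) (by linarith) (by ring)
      using 1
    module

end centeredInter

lemma IsCompact.eq_zero_of_forall_add_mem {n : ℕ} {S : Set (EuclideanSpace ℝ (Fin n))}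
    (hS : IsCompact S) (hne : S.Nonempty) {v : EuclideanSpace ℝ (Fin n)}
    (hv : ∀ p ∈ S, p + v ∈ S) : v = 0 := by
  obtain ⟨p, hp, hmax⟩ := hS.exists_isMaxOn hne
    (f := fun p => inner ℝ v p) (by fun_prop)
  have h : inner ℝ v (p + v) ≤ inner ℝ v p := hmax (hv p hp)
  rw [inner_add_right] at h
  exact inner_self_eq_zero (𝕜 := ℝ).1
    (le_antisymm (by linarith) real_inner_self_nonneg)

/-- Meyer–Reisner–Schmuckenschläger: for an origin-symmetric convex body `K ⊆ ℝⁿ`, `n > 1`,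
the superlevel sets of the covariogram `g_{K,K}` at heights `0 < h < |K|` are strictly
convex. -/
theorem covariogram_symmetric_strict_level_sets
    (n : ℕ) (hn : 1 < n)
    (K : Set (EuclideanSpace ℝ (Fin n)))
    (hKcomp : IsCompact K) (hKconv : Convex ℝ K) (hKint : (interior K).Nonempty)
    (hKsymm : K = -K)
    (g : EuclideanSpace ℝ (Fin n) → ℝ)
    (hg : ∀ x, g x = (volume (K ∩ (x +ᵥ K))).toReal) :
    ∀ h : ℝ, 0 < h → h < (volume K).toReal →
      ∀ x y : EuclideanSpace ℝ (Fin n), x ≠ y → h ≤ g x → h ≤ g y →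
        ∀ t ∈ Ioo (0 : ℝ) 1, h < g ((1 - t) • x + t • y) := by
  intro h hpos _ x y hxy hx hy t ht
  have hgc : ∀ z, g z = volume.real (centeredInter K z) := fun z => by
    rw [hg, volume_inter_vadd, measureReal_def]
  rw [hgc] at hx hy ⊢
  have ha : 0 < 1 - t := sub_pos.2 ht.2
  have hb : 0 < t := ht.1
  have hab : 1 - t + t = 1 := by ring
  set z := (1 - t) • x + t • y with hz
  have hcomp := isCompact_centeredInter hKcomp
  have hABM : ∀ p ∈ centeredInter K x, ∀ q ∈ centeredInter K y,
      (1 - t) • p + t • q ∈ centeredInter K z := fun p hp q hq =>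
    smul_add_smul_mem_centeredInter hKconv ha.le hb.le hab hp hq
  by_contra! hle
  have hBM := (rpow_mul_rpow_volume_le ha hb hab (hcomp x) (hcomp y) (hcomp z) hABM).trans hle
  have hhh : h ^ (1 - t) * h ^ t = h := by rw [← Real.rpow_add hpos, hab, Real.rpow_one]
  have hxh : volume.real (centeredInter K x) = h := by
    refine le_antisymm (not_lt.1 fun hlt => ?_) hx
    have h1 : h ^ (1 - t) < volume.real (centeredInter K x) ^ (1 - t) :=
      Real.rpow_lt_rpow hpos.le hlt ha
    have h2 : h ^ t ≤ volume.real (centeredInter K y) ^ t := Real.rpow_le_rpow hpos.le hy hb.le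
    have h3 := mul_lt_mul h1 h2 (Real.rpow_pos_of_pos hpos _) (Real.rpow_nonneg (by positivity) _)
    linarith
  have hyh : volume.real (centeredInter K y) = h := by
    refine le_antisymm (not_lt.1 fun hlt => ?_) hy
    have h1 : h ^ t < volume.real (centeredInter K y) ^ t := Real.rpow_lt_rpow hpos.le hlt hb
    rw [hxh] at hBM
    have h3 := mul_lt_mul_of_pos_left h1 (Real.rpow_pos_of_pos hpos (1 - t))
    linarith
  have hzh : volume.real (centeredInter K z) = h := by
    refine le_antisymm hle ?_
    have := rpow_mul_rpow_volume_le ha hb hab (hcomp x) (hcomp y) (hcomp z) hABM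
    rwa [hxh, hyh, hhh] at this
  have hsymm : ∀ z, ∀ p ∈ centeredInter K z, -p ∈ centeredInter K z :=
    fun z p hp => neg_mem_centeredInter hKsymm hp
  have hsub := subset_of_volume_eq ha hb hab (hcomp x) (hcomp y) (hcomp z)
    (convex_centeredInter hKconv x) (convex_centeredInter hKconv y) (hsymm x) (hsymm y) (hsymm z)
    hABM hpos hxh hyh hzh
  have hshift : ∀ {ε : ℝ}, |ε| ≤ 1 - t → |ε| ≤ t → ∀ p ∈ centeredInter K x,
      p + (ε / 2) • (y - x) ∈ centeredInter K z := fun h1 h2 p hp =>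
    add_smul_mem_centeredInter hKconv hab h1 h2 hp (hsub hp)
  have hxz : centeredInter K x ⊆ centeredInter K z := fun p hp => by
    simpa using hshift (ε := 0) (by simpa using ha.le) (by simpa using hb.le) p hp
  have hzx : centeredInter K z ⊆ centeredInter K x := by
    refine (convex_centeredInter hKconv z).subset_of_volume_diff_eq_zero (hzh ▸ hpos)
      (hcomp x).isClosed ?_
    rw [measure_sdiff hxz (hcomp x).measurableSet.nullMeasurableSet (hcomp x).measure_ne_top,
      tsub_eq_zero_iff_le, ← ENNReal.toReal_le_toReal (hcomp z).measure_ne_top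
      (hcomp x).measure_ne_top]
    exact (hzh.trans hxh.symm).le
  have hne : (centeredInter K x).Nonempty := by
    by_contra hemp
    rw [not_nonempty_iff_eq_empty.1 hemp, measureReal_empty] at hxh
    exact hpos.ne hxh
  set ε := min (1 - t) t with hε
  have hεpos : 0 < ε := lt_min ha hb
  have hv := (hcomp x).eq_zero_of_forall_add_mem hne fun p hp =>
    hzx (hshift (ε := ε) (by rw [abs_of_pos hεpos]; exact min_le_left _ _)
      (by rw [abs_of_pos hεpos]; exact min_le_right _ _) p hp)
  rcases smul_eq_zero.1 hv with h0 | h0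
  · linarith
  · exact hxy (sub_eq_zero.1 h0).symm
end
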